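/- arXiv:math/0112296 — 5 statements merged into one kernel-verified Lean document; each statement's English description precedes it below -/
import Mathlib

section
/- The volume of the set {(A,B) ∈ C × C : dist(A,B) ≤ a} equals (43/30 − π/6)·a⁶; in particular the proportion of pairs of points of the cube whose separation does not exceed the side length lies strictly between 0.909 and 0.910 (about 91%). -/
open MeasureTheory Real Set

/-- The cube `[0,a]³` in Euclidean 3-space. -/
def cube (a : ℝ) : Set (EuclideanSpace ℝ (Fin 3)) := {x | ∀ i, x i ∈ Set.Icc 0 a}

lemma angular (r : ℝ) : ∫ t in (-π)..π, (1 - r * |cos t|) * (1 - r * |sin t|) = 2 * π - 8 * r + 2 * r ^ 2 := by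
  set g : ℝ → ℝ := fun t => (1 - r * |cos t|) * (1 - r * |sin t|) with hg
  have hp : Function.Periodic g (π / 2) := by
    intro t
    simp only [hg, cos_add_pi_div_two, sin_add_pi_div_two, abs_neg]; ring
  have hc : Continuous g := by fun_prop
  have hi : ∀ a b, IntervalIntegrable g volume a b := fun a b => hc.intervalIntegrable a b
  have h0 : ∫ t in (0:ℝ)..(π / 2), g t = π / 2 - 2 * r + r ^ 2 / 2 := by
    have : ∫ t in (0:ℝ)..(π / 2), g t = ∫ t in (0:ℝ)..(π / 2), (1 - r * cos t) * (1 - r * sin t) := by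
      apply intervalIntegral.integral_congr
      intro t ht
      rw [uIcc_of_le (by positivity)] at ht
      have h1 : 0 ≤ cos t := cos_nonneg_of_mem_Icc ⟨by linarith [ht.1, pi_pos], ht.2⟩
      have h2 : 0 ≤ sin t := sin_nonneg_of_mem_Icc ⟨ht.1, by linarith [ht.2, pi_pos]⟩
      simp only [hg, abs_of_nonneg h1, abs_of_nonneg h2]
    rw [this, intervalIntegral.integral_eq_sub_of_hasDerivAt
      (f := fun t => t - r * sin t + r * cos t + r ^ 2 / 2 * sin t ^ 2)]
    · simp; ring
    · intro t _
      have := (((hasDerivAt_id t).sub ((hasDerivAt_sin t).const_mul r)).add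
        ((hasDerivAt_cos t).const_mul r)).add (((hasDerivAt_sin t).pow 2).const_mul (r ^ 2 / 2))
      refine HasDerivAt.congr_deriv this ?_
      simp; ring
    · apply Continuous.intervalIntegrable; fun_prop
  have e := hp.intervalIntegral_add_zsmul_eq 4 (-π) hi
  have e2 := hp.intervalIntegral_add_eq (-π) 0
  rw [e2] at e
  have : -π + (4:ℤ) • (π / 2) = π := by simp; ring
  rw [this, zero_add, h0] at e
  rw [e]; simp; ring

lemma radial : ∫ r in (0:ℝ)..1, r * (2 * √(1 - r ^ 2) - (1 - r ^ 2)) * (2 * π - 8 * r + 2 * r ^ 2)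
    = 43 / 30 - π / 6 := by
  rw [intervalIntegral.integral_eq_sub_of_hasDerivAt_of_le (by norm_num)
    (f := fun r => -(4 * π / 3) * ((1 - r ^ 2) * √(1 - r ^ 2))
      - 2 * (arcsin r - r * (1 - 2 * r ^ 2) * √(1 - r ^ 2))
      + 4 * (-((1 - r ^ 2) * √(1 - r ^ 2)) / 3 + (1 - r ^ 2) ^ 2 * √(1 - r ^ 2) / 5)
      + (-π * r ^ 2 + 8 * r ^ 3 / 3 - r ^ 4 / 2 + π * r ^ 4 / 2 - 8 * r ^ 5 / 5 + r ^ 6 / 3))]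
  · simp; ring
  · fun_prop
  · intro r hr
    have hpos : 0 < 1 - r ^ 2 := by nlinarith [hr.1, hr.2]
    have hs : HasDerivAt (fun r : ℝ => √(1 - r ^ 2)) (-(2 * r) / (2 * √(1 - r ^ 2))) r := by
      have := (((hasDerivAt_id r).pow 2).const_sub 1).sqrt (by simpa using hpos.ne')
      simpa using this
    have hq : HasDerivAt (fun r : ℝ => 1 - r ^ 2) (-(2 * r)) r := by
      simpa using ((hasDerivAt_id r).pow 2).const_sub 1
    have ha := hasDerivAt_arcsin (by linarith [hr.1] : r ≠ -1) (by linarith [hr.2] : r ≠ 1)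
    have hid := hasDerivAt_id r
    have hP : HasDerivAt (fun r : ℝ => (-π * r ^ 2 + 8 * r ^ 3 / 3 - r ^ 4 / 2 + π * r ^ 4 / 2 - 8 * r ^ 5 / 5 + r ^ 6 / 3)) (-2 * π * r + 8 * r ^ 2 - 2 * r ^ 3 + 2 * π * r ^ 3 - 8 * r ^ 4 + 2 * r ^ 5) r := by
      have := (((((((hid.pow 2).const_mul (-π)).add (((hid.pow 3).const_mul 8).div_const 3)).sub ((hid.pow 4).div_const 2)).add (((hid.pow 4).const_mul π).div_const 2)).sub (((hid.pow 5).const_mul 8).div_const 5))).add ((hid.pow 6).div_const 3)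
      refine HasDerivAt.congr_deriv this ?_
      simp; ring
    have hs0 : √(1 - r ^ 2) ≠ 0 := (sqrt_pos.2 hpos).ne'
    have hsq : √(1 - r ^ 2) ^ 2 = 1 - r ^ 2 := sq_sqrt hpos.le
    have h1 : HasDerivAt (fun r : ℝ => (1 - r ^ 2) * √(1 - r ^ 2)) (-3 * r * √(1 - r ^ 2)) r := by
      refine HasDerivAt.congr_deriv (hq.mul hs) ?_
      generalize √(1 - r ^ 2) = s at *
      rw [← hsq]
      field_simp
      ring
    have h2 : HasDerivAt (fun r : ℝ => arcsin r - r * (1 - 2 * r ^ 2) * √(1 - r ^ 2)) (8 * r ^ 2 * √(1 - r ^ 2)) r := by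
      refine HasDerivAt.congr_deriv (ha.sub ((hid.mul ((((hid.pow 2).const_mul 2)).const_sub 1)).mul hs)) ?_
      simp
      generalize √(1 - r ^ 2) = s at *
      field_simp
      have : r ^ 2 = 1 - s ^ 2 := by linarith
      ring_nf
      rw [show r ^ 4 = (r ^ 2) ^ 2 by ring, this]
      ring
    have h3 : HasDerivAt (fun r : ℝ => (1 - r ^ 2) ^ 2 * √(1 - r ^ 2)) (-5 * r * (1 - r ^ 2) * √(1 - r ^ 2)) r := by
      refine HasDerivAt.congr_deriv ((hq.pow 2).mul hs) ?_
      simp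
      generalize √(1 - r ^ 2) = s at *
      rw [← hsq]
      field_simp
      ring
    refine HasDerivAt.congr_deriv ((((h1.const_mul (-(4 * π / 3))).sub (h2.const_mul 2)).add
      (((h1.neg.div_const 3).add (h3.div_const 5)).const_mul 4)).add hP) ?_
    ring
  · apply Continuous.intervalIntegrable; fun_prop
lemma inner1 (t : ℝ) (ht : t ≤ 1) (h0 : 0 ≤ t) : ∫⁻ w : ℝ, (if w ^ 2 + t ≤ 1 then ENNReal.ofReal (1 - |w|) else 0) =
    ENNReal.ofReal (2 * √(1 - t) - (1 - t)) := by
  set s := √(1 - t) with hs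
  have hs0 : 0 ≤ s := sqrt_nonneg _
  have hss : s ^ 2 = 1 - t := sq_sqrt (by linarith)
  have hs1 : s ≤ 1 := by nlinarith
  have : (fun w : ℝ => (if w ^ 2 + t ≤ 1 then ENNReal.ofReal (1 - |w|) else 0)) =
      (Icc (-s) s).indicator (fun w => ENNReal.ofReal (1 - |w|)) := by
    ext w
    simp only [indicator, mem_Icc, ← abs_le]
    congr 1
    rw [eq_iff_iff, ← abs_of_nonneg hs0, ← sq_le_sq, hss]
    constructor <;> intro h <;> linarith
  rw [this, lintegral_indicator measurableSet_Icc, ← ofReal_integral_eq_lintegral_ofReal]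
  · rw [integral_Icc_eq_integral_Ioc, ← intervalIntegral.integral_of_le (by linarith), ← hss]
    congr 1
    have hi : ∀ a b, IntervalIntegrable (fun w : ℝ => 1 - |w|) volume a b := fun a b => Continuous.intervalIntegrable (by fun_prop) a b
    rw [← intervalIntegral.integral_add_adjacent_intervals (hi (-s) 0) (hi 0 s)]
    have e1 : ∫ w in (-s)..0, (1 - |w|) = ∫ w in (-s)..0, (1 + w) := by
      apply intervalIntegral.integral_congr
      intro w hw
      rw [uIcc_of_le (by linarith)] at hw
      simp [abs_of_nonpos hw.2]
    have e2 : ∫ w in 0..s, (1 - |w|) = ∫ w in 0..s, (1 - w) := by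
      apply intervalIntegral.integral_congr
      intro w hw
      rw [uIcc_of_le (by linarith)] at hw
      simp [abs_of_nonneg hw.1]
    rw [e1, e2, intervalIntegral.integral_add (by simp) (by simp), intervalIntegral.integral_sub (by simp) (by simp)]
    simp; ring
  · exact (Continuous.continuousOn (by fun_prop)).integrableOn_Icc
  · filter_upwards [ae_restrict_mem measurableSet_Icc] with w hw
    have := abs_le.2 hw
    simp; linarith

lemma split3 (f : ℝ → ℝ → ℝ → ENNReal) (hf : Measurable fun p : ℝ × ℝ × ℝ => f p.1 p.2.1 p.2.2) :
    ∫⁻ d : Fin 3 → ℝ, f (d 0) (d 1) (d 2) = ∫⁻ q : ℝ × ℝ, ∫⁻ w, f w q.1 q.2 := by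
  have m1 := volume_preserving_piFinSuccAbove (fun _ : Fin 3 => ℝ) 0
  have m2 := (MeasurePreserving.id (volume : Measure ℝ)).prod (volume_preserving_finTwoArrow ℝ)
  have m := m2.comp m1
  have := m.lintegral_comp hf
  rw [Measure.volume_eq_prod, lintegral_prod_symm _ hf.aemeasurable] at this
  exact this

noncomputable def kk (x y z : ℝ) : ENNReal :=
  if x ^ 2 + (y ^ 2 + z ^ 2) ≤ 1 then
    ENNReal.ofReal (1 - |x|) * (ENNReal.ofReal (1 - |y|) * ENNReal.ofReal (1 - |z|)) else 0

lemma kk_meas : Measurable fun p : ℝ × ℝ × ℝ => kk p.1 p.2.1 p.2.2 := by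
  unfold kk
  refine Measurable.ite (measurableSet_le (by fun_prop) (by fun_prop)) (by fun_prop) (by fun_prop)

lemma kk_inner (y z : ℝ) : ∫⁻ w, kk w y z = if y ^ 2 + z ^ 2 ≤ 1 then
    ENNReal.ofReal ((2 * √(1 - (y ^ 2 + z ^ 2)) - (1 - (y ^ 2 + z ^ 2))) * ((1 - |y|) * (1 - |z|))) else 0 := by
  have ht : 0 ≤ y ^ 2 + z ^ 2 := by positivity
  split_ifs with h
  · have hy : |y| ≤ 1 := by rw [← sq_le_one_iff_abs_le_one]; nlinarith
    have hz : |z| ≤ 1 := by rw [← sq_le_one_iff_abs_le_one]; nlinarith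
    have e : 0 ≤ (1 - |y|) * (1 - |z|) := mul_nonneg (by linarith) (by linarith)
    rw [ENNReal.ofReal_mul' e, ENNReal.ofReal_mul (by linarith), ← inner1 _ h ht, ← lintegral_mul_const]
    · simp only [kk, ite_mul, zero_mul]
    · exact Measurable.ite (measurableSet_le (by fun_prop) (by fun_prop)) (by fun_prop) (by fun_prop)
  · have : ∀ w, kk w y z = 0 := fun w => if_neg (by nlinarith [sq_nonneg w])
    simp [this]

lemma total : ∫⁻ d : Fin 3 → ℝ, kk (d 0) (d 1) (d 2) = ENNReal.ofReal (43 / 30 - π / 6) := by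
  rw [split3 kk kk_meas]
  simp only [kk_inner]
  rw [← lintegral_comp_polarCoord_symm]
  set G : ℝ × ℝ → ℝ := fun p => p.1 * (2 * √(1 - p.1 ^ 2) - (1 - p.1 ^ 2)) *
    ((1 - p.1 * |cos p.2|) * (1 - p.1 * |sin p.2|)) with hG
  have hGc : Continuous G := by fun_prop
  have hm : MeasurableSet (Ioi (0:ℝ) ×ˢ Ioo (-π) π) := measurableSet_Ioi.prod measurableSet_Ioo
  have hm' : MeasurableSet (Ioc (0:ℝ) 1 ×ˢ Ioo (-π) π) := measurableSet_Ioc.prod measurableSet_Ioo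
  have e1 : ∀ p : ℝ × ℝ, (polarCoord.target).indicator (fun p : ℝ × ℝ => ENNReal.ofReal p.1 • 
      (if (polarCoord.symm p).1 ^ 2 + (polarCoord.symm p).2 ^ 2 ≤ 1 then
    ENNReal.ofReal ((2 * √(1 - ((polarCoord.symm p).1 ^ 2 + (polarCoord.symm p).2 ^ 2)) - (1 - ((polarCoord.symm p).1 ^ 2 + (polarCoord.symm p).2 ^ 2))) * ((1 - |(polarCoord.symm p).1|) * (1 - |(polarCoord.symm p).2|))) else 0)) p
     = (Ioc (0:ℝ) 1 ×ˢ Ioo (-π) π).indicator (fun p => ENNReal.ofReal (G p)) p := by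
    rintro ⟨r, t⟩
    have hsq : (r * cos t) ^ 2 + (r * sin t) ^ 2 = r ^ 2 := by
      linear_combination r ^ 2 * sin_sq_add_cos_sq t
    have ht : polarCoord.target = Ioi (0:ℝ) ×ˢ Ioo (-π) π := rfl
    rw [ht]
    simp only [indicator, polarCoord_symm_apply, hsq, mem_prod, mem_Ioi, mem_Ioc, hG]
    by_cases h1 : 0 < r
    · by_cases h2 : t ∈ Ioo (-π) π
      · have h3 : r ^ 2 ≤ 1 ↔ r ≤ 1 := by
          constructor <;> intro h <;> nlinarith
        simp only [h1, h2, h3, and_true, true_and, if_true, smul_eq_mul, mul_ite, mul_zero,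
          ← ENNReal.ofReal_mul h1.le, abs_mul, abs_of_pos h1, mul_assoc]
      · simp [h2]
    · simp [h1]
  rw [← lintegral_indicator (show MeasurableSet polarCoord.target from hm), lintegral_congr e1,
    lintegral_indicator hm']
  have hint : IntegrableOn G (Ioc (0:ℝ) 1 ×ˢ Ioo (-π) π) := 
    (hGc.continuousOn.integrableOn_compact (isCompact_Icc.prod isCompact_Icc : IsCompact (Icc (0:ℝ) 1 ×ˢ Icc (-π) π))).mono_set
      (prod_mono Ioc_subset_Icc_self Ioo_subset_Icc_self)
  rw [← ofReal_integral_eq_lintegral_ofReal hint]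
  · congr 1
    rw [Measure.volume_eq_prod] at hint ⊢
    rw [setIntegral_prod _ hint, ← radial, intervalIntegral.integral_of_le (by norm_num)]
    congr 1
    ext r
    simp only [hG]
    rw [integral_const_mul, ← integral_Ioc_eq_integral_Ioo,
      ← intervalIntegral.integral_of_le (by linarith [pi_pos]), angular]
  · filter_upwards [ae_restrict_mem hm'] with p hp
    obtain ⟨⟨h0, h1⟩, -⟩ := hp
    have hs : 0 ≤ 1 - p.1 ^ 2 := by nlinarith
    have hsq := sq_sqrt hs
    have hs0 := sqrt_nonneg (1 - p.1 ^ 2)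
    have hs1 : √(1 - p.1 ^ 2) ≤ 1 := sqrt_le_iff.2 ⟨by norm_num, by nlinarith⟩
    have hc := abs_cos_le_one p.2
    have hsn := abs_sin_le_one p.2
    have hc0 := abs_nonneg (cos p.2)
    have hs0' := abs_nonneg (sin p.2)
    refine mul_nonneg (mul_nonneg h0.le (by nlinarith)) (mul_nonneg (by nlinarith) (by nlinarith))

lemma sliceVol (d : Fin 3 → ℝ) :
    volume {x : Fin 3 → ℝ | (∀ i, x i ∈ Icc (0:ℝ) 1) ∧ (∀ i, x i + d i ∈ Icc (0:ℝ) 1) ∧ ∑ i, d i ^ 2 ≤ 1}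
      = kk (d 0) (d 1) (d 2) := by
  by_cases h : ∑ i, d i ^ 2 ≤ 1
  · have : {x : Fin 3 → ℝ | (∀ i, x i ∈ Icc (0:ℝ) 1) ∧ (∀ i, x i + d i ∈ Icc (0:ℝ) 1) ∧ ∑ i, d i ^ 2 ≤ 1}
      = Icc (fun i => max 0 (-d i)) (fun i => min 1 (1 - d i)) := by
      ext x
      simp only [h, and_true, mem_ofPred_eq, mem_Icc, Pi.le_def, ← forall_and]
      refine forall_congr' fun i => ?_
      simp only [max_le_iff, le_min_iff]
      constructor
      · rintro ⟨⟨_, _⟩, _, _⟩; refine ⟨⟨?_, ?_⟩, ?_, ?_⟩ <;> linarith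
      · rintro ⟨⟨_, _⟩, _, _⟩; refine ⟨⟨?_, ?_⟩, ?_, ?_⟩ <;> linarith
    have e : ∀ u : ℝ, min 1 (1 - u) - max 0 (-u) = 1 - |u| := by
      intro u
      rcases le_total 0 u with hu | hu
      · rw [min_eq_right (by linarith), max_eq_left (by linarith), abs_of_nonneg hu]; ring
      · rw [min_eq_left (by linarith), max_eq_right (by linarith), abs_of_nonpos hu]
    rw [this, Real.volume_Icc_pi]
    simp only [e]
    rw [Fin.sum_univ_three, add_assoc] at h
    rw [kk, if_pos h, Fin.prod_univ_three, mul_assoc]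
  · have h' := h
    rw [Fin.sum_univ_three, add_assoc] at h'
    simp [h, kk, h']

lemma unit_case : volume {p : EuclideanSpace ℝ (Fin 3) × EuclideanSpace ℝ (Fin 3) |
        p.1 ∈ cube 1 ∧ p.2 ∈ cube 1 ∧ dist p.1 p.2 ≤ 1} = ENNReal.ofReal (43 / 30 - π / 6) := by
  set T : Set ((Fin 3 → ℝ) × (Fin 3 → ℝ)) := {p | (∀ i, p.1 i ∈ Icc (0:ℝ) 1) ∧ (∀ i, p.2 i ∈ Icc (0:ℝ) 1) ∧ ∑ i, (p.2 i - p.1 i) ^ 2 ≤ 1} with hT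
  have hTc : IsClosed T := by
    simp only [hT, ofPred_and, ofPred_forall, mem_Icc]
    refine IsClosed.inter (isClosed_iInter fun i => ?_) (IsClosed.inter (isClosed_iInter fun i => ?_) ?_)
    · exact (isClosed_le (by fun_prop) (by fun_prop)).inter (isClosed_le (by fun_prop) (by fun_prop))
    · exact (isClosed_le (by fun_prop) (by fun_prop)).inter (isClosed_le (by fun_prop) (by fun_prop))
    · exact isClosed_le (by fun_prop) (by fun_prop)
  have hTm := hTc.measurableSet
  have m1 := (PiLp.volume_preserving_ofLp (Fin 3)).prod (PiLp.volume_preserving_ofLp (Fin 3))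
  have m2 := measurePreserving_prod_add (volume : Measure (Fin 3 → ℝ)) (volume : Measure (Fin 3 → ℝ))
  have e : {p : EuclideanSpace ℝ (Fin 3) × EuclideanSpace ℝ (Fin 3) |
        p.1 ∈ cube 1 ∧ p.2 ∈ cube 1 ∧ dist p.1 p.2 ≤ 1} = (Prod.map WithLp.ofLp WithLp.ofLp) ⁻¹' T := by
    ext p
    simp only [mem_ofPred_eq, cube, hT, mem_preimage, Prod.map_fst, Prod.map_snd]
    rw [dist_comm, EuclideanSpace.dist_eq, sqrt_le_iff]
    simp only [Real.dist_eq, sq_abs, one_pow, zero_le_one, true_and]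
  rw [e, Measure.volume_eq_prod, m1.measure_preimage hTm.nullMeasurableSet,
    ← m2.measure_preimage hTm.nullMeasurableSet, Measure.prod_apply_symm (m2.measurable hTm), ← total]
  refine lintegral_congr fun d => ?_
  rw [← sliceVol]
  congr 1
  ext x
  simp [hT]

open Pointwise in
theorem volume_pairs_dist_le_side (a : ℝ) (ha : 0 < a) :
    volume {p : EuclideanSpace ℝ (Fin 3) × EuclideanSpace ℝ (Fin 3) |
        p.1 ∈ cube a ∧ p.2 ∈ cube a ∧ dist p.1 p.2 ≤ a} =
      ENNReal.ofReal ((43 / 30 - π / 6) * a ^ 6) ∧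
    (0.909 : ℝ) < 43 / 30 - π / 6 ∧ (43 / 30 - π / 6 : ℝ) < 0.910 := by
  have p1 := pi_gt_d4
  have p2 := pi_lt_d4
  refine ⟨?_, by linarith, by linarith⟩
  have e : {p : EuclideanSpace ℝ (Fin 3) × EuclideanSpace ℝ (Fin 3) |
        p.1 ∈ cube a ∧ p.2 ∈ cube a ∧ dist p.1 p.2 ≤ a} = a • {p : EuclideanSpace ℝ (Fin 3) × EuclideanSpace ℝ (Fin 3) |
        p.1 ∈ cube 1 ∧ p.2 ∈ cube 1 ∧ dist p.1 p.2 ≤ 1} := by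
    ext p
    rw [mem_smul_set_iff_inv_smul_mem₀ ha.ne']
    have key : ∀ u : ℝ, (0 ≤ a⁻¹ * u ↔ 0 ≤ u) ∧ (a⁻¹ * u ≤ 1 ↔ u ≤ a) := fun u =>
      ⟨mul_nonneg_iff_of_pos_left (by positivity), by rw [inv_mul_le_iff₀ ha, mul_one]⟩
    simp only [mem_ofPred_eq, cube, Prod.smul_fst, Prod.smul_snd, PiLp.smul_apply, smul_eq_mul, mem_Icc,
      (key _).1, (key _).2, dist_smul₀, Real.norm_eq_abs, abs_of_pos (inv_pos.2 ha)]
  haveI : (volume : Measure (EuclideanSpace ℝ (Fin 3) × EuclideanSpace ℝ (Fin 3))).IsAddHaarMeasure := by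
    rw [Measure.volume_eq_prod]; infer_instance
  rw [e, Measure.addHaar_smul, unit_case, ← ENNReal.ofReal_mul (by positivity)]
  congr 1
  rw [Module.finrank_prod]
  simp only [finrank_euclideanSpace, Fintype.card_fin]
  rw [abs_of_pos (by positivity)]
  ring
end

section
/- The proportion of pairs with separation between a and √2·a is about 9%: the volume of the set {(A,B) ∈ C × C : a < dist(A,B) ≤ √2·a} lies strictly between 0.085·a⁶ and 0.095·a⁶. -/
open MeasureTheory Real Set

lemma lint_Icc (f : ℝ → ENNReal) (g : ℝ → ℝ) (c d : ℝ) (hc : 0 ≤ c) (hcd : c ≤ d) (hd : d ≤ 1)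
    (hg : ContinuousOn g (Icc c d)) (hn : ∀ x ∈ Icc c d, 0 ≤ g x)
    (h1 : ∀ x ∈ Icc c d, f x = ENNReal.ofReal (g x))
    (h0 : ∀ x ∈ Icc (0:ℝ) 1, x ∉ Icc c d → f x = 0) :
    ∫⁻ x in Icc (0:ℝ) 1, f x = ENNReal.ofReal (∫ x in c..d, g x) := by
  have e1 : ∫⁻ x in Icc (0:ℝ) 1, f x
      = ∫⁻ x in Icc (0:ℝ) 1, (Icc c d).indicator (fun x => ENNReal.ofReal (g x)) x := by
    refine setLIntegral_congr_fun measurableSet_Icc ?_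
    intro x hx
    by_cases h : x ∈ Icc c d
    · simp only [indicator_of_mem h]; exact h1 x h
    · simp only [indicator_of_notMem h]; exact h0 x hx h
  rw [e1, lintegral_indicator measurableSet_Icc, Measure.restrict_restrict measurableSet_Icc,
    inter_eq_left.2 (Icc_subset_Icc hc hd), intervalIntegral.integral_of_le hcd,
    ← integral_Icc_eq_integral_Ioc, ofReal_integral_eq_lintegral_ofReal]
  · exact hg.integrableOn_Icc
  · exact (ae_restrict_iff' measurableSet_Icc).2 (Filter.Eventually.of_forall hn)

/-- The law of `|x - y|`. -/
noncomputable def nu : Measure ℝ :=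
  (volume.restrict (Icc (0:ℝ) 1)).withDensity (fun u => ENNReal.ofReal (2 * (1 - u)))

lemma lint_nu (f : ℝ → ENNReal) :
    ∫⁻ x, f x ∂nu = ∫⁻ x in Icc (0:ℝ) 1, ENNReal.ofReal (2 * (1 - x)) * f x := by
  unfold nu
  rw [lintegral_withDensity_eq_lintegral_mul_non_measurable]
  · rfl
  · fun_prop
  · exact Filter.Eventually.of_forall fun x => ENNReal.ofReal_lt_top

lemma lint_nu' (f : ℝ → ENNReal) (g : ℝ → ℝ) (c d : ℝ) (hc : 0 ≤ c) (hcd : c ≤ d) (hd : d ≤ 1)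
    (hg : ContinuousOn g (Icc c d)) (hn : ∀ x ∈ Icc c d, 0 ≤ g x)
    (h1 : ∀ x ∈ Icc c d, f x = ENNReal.ofReal (g x))
    (h0 : ∀ x ∈ Icc (0:ℝ) 1, x ∉ Icc c d → f x = 0) :
    ∫⁻ x, f x ∂nu = ENNReal.ofReal (∫ x in c..d, 2 * (1 - x) * g x) := by
  rw [lint_nu]
  refine lint_Icc _ _ c d hc hcd hd (by fun_prop) ?_ ?_ ?_
  · intro x hx
    have := hn x hx
    have : 0 ≤ 1 - x := by linarith [hx.2]
    positivity
  · intro x hx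
    have : 0 ≤ 1 - x := by linarith [hx.2]
    rw [h1 x hx, ← ENNReal.ofReal_mul (by positivity)]
  · intro x hx h
    rw [h0 x hx h, mul_zero]

lemma nu_apply (s : Set ℝ) (hs : MeasurableSet s) (c d : ℝ) (hc : 0 ≤ c) (hcd : c ≤ d) (hd : d ≤ 1)
    (h1 : ∀ x ∈ Icc c d, x ∈ s) (h0 : ∀ x ∈ Icc (0:ℝ) 1, x ∉ Icc c d → x ∉ s) :
    nu s = ENNReal.ofReal (2 * d - d ^ 2 - (2 * c - c ^ 2)) := by
  rw [← lintegral_indicator_one hs,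
    lint_nu' (s.indicator 1) (fun _ => 1) c d hc hcd hd (by fun_prop) (by simp)
      (fun x hx => by simp [h1 x hx]) (fun x hx h => by simp [h0 x hx h])]
  congr 1
  have : ∀ x ∈ uIcc c d, HasDerivAt (fun x : ℝ => 2 * x - x ^ 2) (2 * (1 - x) * 1) x := by
    intro x _
    refine (((hasDerivAt_id x).const_mul 2).sub ((hasDerivAt_id x).pow 2)).congr_deriv ?_
    simp; ring
  rw [intervalIntegral.integral_eq_sub_of_hasDerivAt this]
  exact Continuous.intervalIntegrable (by fun_prop) _ _

lemma nu_null (s : Set ℝ) (hs : MeasurableSet s) (h0 : ∀ x ∈ Icc (0:ℝ) 1, x ∉ s) : nu s = 0 := by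
  rw [← lintegral_indicator_one hs, lint_nu]
  rw [setLIntegral_congr_fun (g := fun _ => 0) measurableSet_Icc]
  · simp
  · intro x hx
    simp [h0 x hx]

instance nu_prob : IsProbabilityMeasure nu := by
  constructor
  rw [nu_apply univ MeasurableSet.univ 0 1 le_rfl zero_le_one le_rfl (by simp)
    (fun x hx h => absurd hx h)]
  norm_num

lemma nu_ae : ∀ᵐ x ∂nu, x ∈ Icc (0:ℝ) 1 := by
  rw [ae_iff]
  exact nu_null _ (measurableSet_Icc.compl) (fun x hx h => h hx)

lemma nu_Ici (r : ℝ) (h0 : 0 ≤ r) (h1 : r ≤ 1) : nu (Ici r) = ENNReal.ofReal ((1 - r) ^ 2) := by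
  rw [nu_apply _ measurableSet_Ici r 1 h0 h1 le_rfl (fun x hx => hx.1)
    (fun x hx h h' => h ⟨h', hx.2⟩)]
  congr 1; ring

lemma nu_sq (t : ℝ) (h0 : 0 ≤ t) (h1 : t ≤ 1) :
    nu {v | v ^ 2 ≤ t} = ENNReal.ofReal (2 * √t - t) := by
  rw [nu_apply _ (measurableSet_le (by fun_prop) (by fun_prop)) 0 (√t) le_rfl (sqrt_nonneg _)
    (Real.sqrt_le_one.2 h1)]
  · rw [sq_sqrt h0]; congr 1; ring
  · intro x hx
    exact (Real.le_sqrt hx.1 h0).1 hx.2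
  · intro x hx h h'
    exact h ⟨hx.1, (Real.le_sqrt hx.1 h0).2 h'⟩

lemma slice (r x : ℝ) (hr : 0 < r) (hx : x ∈ Icc (0:ℝ) 1) :
    volume.restrict (Icc (0:ℝ) 1) {y | r ≤ |x - y|}
      = ENNReal.ofReal (1 - r - x) + ENNReal.ofReal (x - r) := by
  rw [Measure.restrict_apply (measurableSet_le (by fun_prop) (by fun_prop))]
  have : {y | r ≤ |x - y|} ∩ Icc (0:ℝ) 1 = Icc (x + r) 1 ∪ Icc 0 (x - r) := by
    ext y
    simp only [mem_inter_iff, mem_ofPred_eq, mem_Icc, mem_union, le_abs]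
    have := hx.1; have := hx.2
    constructor
    · rintro ⟨h | h, h1, h2⟩
      · right; constructor <;> linarith
      · left; constructor <;> linarith
    · rintro (⟨h1, h2⟩ | ⟨h1, h2⟩)
      · exact ⟨Or.inr (by linarith), by linarith, by linarith⟩
      · exact ⟨Or.inl (by linarith), by linarith, by linarith⟩
  rw [this, measure_union _ measurableSet_Icc, Real.volume_Icc, Real.volume_Icc]
  · congr 2 <;> ring
  · rw [Set.disjoint_left]
    intro y h1 h2
    linarith [h1.1, h2.2]

lemma nu_eq : Measure.map (fun p : ℝ × ℝ => |p.1 - p.2|)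
    ((volume : Measure (ℝ × ℝ)).restrict (Icc 0 1 ×ˢ Icc 0 1)) = nu := by
  symm
  apply Measure.ext_of_Ici
  intro r
  have hm : Measurable (fun p : ℝ × ℝ => |p.1 - p.2|) := by fun_prop
  rw [Measure.map_apply hm measurableSet_Ici, Measure.volume_eq_prod, ← Measure.prod_restrict,
    Measure.prod_apply (hm measurableSet_Ici)]
  have hsl : ∀ x : ℝ, Prod.mk x ⁻¹' ((fun p : ℝ × ℝ => |p.1 - p.2|) ⁻¹' Ici r)
      = {y | r ≤ |x - y|} := fun x => rfl
  simp_rw [hsl]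
  rcases le_or_gt r 0 with h | h
  · have : ∀ x : ℝ, {y | r ≤ |x - y|} = univ := fun x => by
      ext y; simp; exact h.trans (abs_nonneg _)
    simp_rw [this]
    rw [nu_apply _ measurableSet_Ici 0 1 le_rfl zero_le_one le_rfl (fun x hx => h.trans hx.1)
      (fun x hx h => absurd hx h)]
    simp; norm_num
  rw [setLIntegral_congr_fun measurableSet_Icc (fun x hx => slice r x h hx)]
  rw [lintegral_add_left (by fun_prop)]
  rcases le_or_gt r 1 with h' | h'
  · rw [nu_Ici r h.le h']
    rw [lint_Icc _ (fun x => 1 - r - x) 0 (1 - r) le_rfl (by linarith) (by linarith) (by fun_prop)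
      (fun x hx => by linarith [hx.2]) (fun x hx => rfl) (fun x hx h => by
        apply ENNReal.ofReal_of_nonpos
        by_contra hh
        exact h ⟨hx.1, by linarith⟩)]
    rw [lint_Icc _ (fun x => x - r) r 1 h.le h' le_rfl (by fun_prop)
      (fun x hx => by linarith [hx.1]) (fun x hx => rfl) (fun x hx h => by
        apply ENNReal.ofReal_of_nonpos
        by_contra hh
        exact h ⟨by linarith, hx.2⟩)]
    have e1 : ∫ x in (0:ℝ)..(1-r), (1 - r - x) = (1-r)^2/2 := by
      rw [intervalIntegral.integral_sub (by simp) (by simp)]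
      simp; ring
    have e2 : ∫ x in r..1, (x - r) = (1-r)^2/2 := by
      rw [intervalIntegral.integral_sub (by simp) (by simp)]
      simp; ring
    rw [e1, e2, ← ENNReal.ofReal_add (by positivity) (by positivity)]
    congr 1; ring
  · rw [nu_null _ measurableSet_Ici (fun x hx hh => by linarith [hx.2, mem_Ici.1 hh])]
    symm
    rw [setLIntegral_congr_fun (g := fun _ => 0) measurableSet_Icc
      (fun x hx => ENNReal.ofReal_of_nonpos (by linarith [hx.1])),
      setLIntegral_congr_fun (g := fun _ => 0) measurableSet_Icc
      (fun x hx => ENNReal.ofReal_of_nonpos (by linarith [hx.2]))]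
    simp

lemma I_sqrt : ∫ x in (0:ℝ)..1, √(1 - x ^ 2) = π / 4 := by
  have h := integral_sqrt_one_sub_sq
  have hc : Continuous (fun x : ℝ => √(1 - x ^ 2)) := by fun_prop
  rw [← intervalIntegral.integral_add_adjacent_intervals (b := 0)
    (hc.intervalIntegrable _ _) (hc.intervalIntegrable _ _)] at h
  have h2 := intervalIntegral.integral_comp_neg (a := 0) (b := 1) (fun x : ℝ => √(1 - x ^ 2))
  simp only [neg_zero, even_two, Even.neg_pow] at h2
  linarith

lemma hasDeriv_sq {x : ℝ} : HasDerivAt (fun x : ℝ => 1 - x ^ 2) (-(2 * x)) x := by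
  simpa using ((hasDerivAt_id x).pow 2).const_sub 1

lemma hasDeriv_sqrt {x : ℝ} (hx : x ∈ Ioo (0:ℝ) 1) :
    HasDerivAt (fun x : ℝ => √(1 - x ^ 2)) (-x / √(1 - x ^ 2)) x := by
  have h : 0 < 1 - x ^ 2 := by nlinarith [hx.1, hx.2]
  convert hasDeriv_sq.sqrt h.ne' using 1
  field_simp

lemma sqrt_facts {x : ℝ} (hx : x ∈ Ioo (0:ℝ) 1) : 0 < √(1 - x ^ 2) ∧ √(1 - x ^ 2) ^ 2 = 1 - x ^ 2 := by
  have h : 0 < 1 - x ^ 2 := by nlinarith [hx.1, hx.2]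
  exact ⟨sqrt_pos.2 h, sq_sqrt h.le⟩

lemma I_xsqrt : ∫ x in (0:ℝ)..1, x * √(1 - x ^ 2) = 1 / 3 := by
  rw [intervalIntegral.integral_eq_sub_of_hasDerivAt_of_le (f := fun x => - √(1 - x ^ 2) ^ 3 / 3)
    zero_le_one (by fun_prop) _ (Continuous.intervalIntegrable (by fun_prop) _ _)]
  · norm_num
  · intro x hx
    obtain ⟨h1, h2⟩ := sqrt_facts hx
    refine HasDerivAt.congr_deriv ((((hasDeriv_sqrt hx).pow 3).neg).div_const 3) ?_
    simp
    field_simp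

lemma I_x3 : ∫ x in (0:ℝ)..1, x * √(1 - x ^ 2) ^ 3 = 1 / 5 := by
  rw [intervalIntegral.integral_eq_sub_of_hasDerivAt_of_le (f := fun x => - √(1 - x ^ 2) ^ 5 / 5)
    zero_le_one (by fun_prop) _ (Continuous.intervalIntegrable (by fun_prop) _ _)]
  · norm_num
  · intro x hx
    obtain ⟨h1, h2⟩ := sqrt_facts hx
    refine HasDerivAt.congr_deriv ((((hasDeriv_sqrt hx).pow 5).neg).div_const 5) ?_
    simp
    field_simp

lemma I_3 : ∫ x in (0:ℝ)..1, √(1 - x ^ 2) ^ 3 = 3 * π / 16 := by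
  have h : ∫ x in (0:ℝ)..1, (4 * √(1 - x ^ 2) ^ 3 - 3 * √(1 - x ^ 2)) = 0 := by
    rw [intervalIntegral.integral_eq_sub_of_hasDerivAt_of_le (f := fun x => x * √(1 - x ^ 2) ^ 3)
      zero_le_one (by fun_prop) _ (Continuous.intervalIntegrable (by fun_prop) _ _)]
    · norm_num
    · intro x hx
      obtain ⟨h1, h2⟩ := sqrt_facts hx
      refine HasDerivAt.congr_deriv ((hasDerivAt_id x).mul ((hasDeriv_sqrt hx).pow 3)) ?_
      simp
      field_simp
      have : x ^ 2 = 1 - √(1 - x ^ 2) ^ 2 := by rw [h2]; ring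
      generalize √(1 - x ^ 2) = s at *
      rw [this]; ring
  rw [intervalIntegral.integral_sub (Continuous.intervalIntegrable (by fun_prop) _ _)
    (Continuous.intervalIntegrable (by fun_prop) _ _), intervalIntegral.integral_const_mul,
    intervalIntegral.integral_const_mul, I_sqrt] at h
  linarith

/-- The two-dimensional distribution function. -/
noncomputable def G (r : ℝ) : ℝ := π * r ^ 2 - 8 / 3 * r ^ 3 + r ^ 4 / 2

lemma I_G (r : ℝ) (hr : 0 ≤ r) :
    ∫ u in (0:ℝ)..r, 2 * (1 - u) * (2 * √(r ^ 2 - u ^ 2) - (r ^ 2 - u ^ 2)) = G r := by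
  rcases hr.eq_or_lt with rfl | h
  · simp [G]
  have := intervalIntegral.integral_comp_mul_left (a := 0) (b := 1)
    (fun u => 2 * (1 - u) * (2 * √(r ^ 2 - u ^ 2) - (r ^ 2 - u ^ 2))) h.ne'
  rw [mul_zero, mul_one, smul_eq_mul, eq_inv_mul_iff_mul_eq₀ h.ne'] at this
  rw [← this]
  have e : ∀ x : ℝ, 2 * (1 - r * x) * (2 * √(r ^ 2 - (r * x) ^ 2) - (r ^ 2 - (r * x) ^ 2))
      = 4 * r * √(1 - x ^ 2) - 4 * r ^ 2 * (x * √(1 - x ^ 2))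
        - 2 * r ^ 2 * ((1 - r * x) * (1 - x ^ 2)) := by
    intro x
    have : √(r ^ 2 - (r * x) ^ 2) = r * √(1 - x ^ 2) := by
      rw [show r ^ 2 - (r * x) ^ 2 = r ^ 2 * (1 - x ^ 2) by ring, sqrt_mul (sq_nonneg r), sqrt_sq hr]
    rw [this]; ring
  simp_rw [e]
  have e2 : ∫ x in (0:ℝ)..1, ((1 - r * x) * (1 - x ^ 2)) = 2 / 3 - r / 4 := by
    rw [intervalIntegral.integral_eq_sub_of_hasDerivAt
      (f := fun x => x - x ^ 3 / 3 - r * x ^ 2 / 2 + r * x ^ 4 / 4) _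
      (Continuous.intervalIntegrable (by fun_prop) _ _)]
    · norm_num; ring
    · intro x _
      refine HasDerivAt.congr_deriv ((((hasDerivAt_id x).sub (((hasDerivAt_id x).pow 3).div_const 3)).sub
        ((((hasDerivAt_id x).pow 2).const_mul r).div_const 2)).add
        ((((hasDerivAt_id x).pow 4).const_mul r).div_const 4)) ?_
      simp; ring
  rw [intervalIntegral.integral_sub (Continuous.intervalIntegrable (by fun_prop) _ _)
    (Continuous.intervalIntegrable (by fun_prop) _ _), intervalIntegral.integral_sub
    (Continuous.intervalIntegrable (by fun_prop) _ _)
    (Continuous.intervalIntegrable (by fun_prop) _ _), intervalIntegral.integral_const_mul,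
    intervalIntegral.integral_const_mul, intervalIntegral.integral_const_mul, I_sqrt, I_xsqrt, e2]
  unfold G
  ring

lemma I_F : ∫ w in (0:ℝ)..1, 2 * (1 - w) * G (√(1 - w ^ 2)) = 43 / 30 - π / 6 := by
  have e : ∀ w ∈ uIcc (0:ℝ) 1, 2 * (1 - w) * G (√(1 - w ^ 2)) =
      (2 * (1 - w) * (π * (1 - w ^ 2) + (1 - w ^ 2) ^ 2 / 2)) -
      16 / 3 * √(1 - w ^ 2) ^ 3 + 16 / 3 * (w * √(1 - w ^ 2) ^ 3) := by
    intro w hw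
    rw [uIcc_of_le zero_le_one] at hw
    have h2 : √(1 - w ^ 2) ^ 2 = 1 - w ^ 2 := sq_sqrt (by nlinarith [hw.1, hw.2])
    unfold G
    rw [show √(1 - w ^ 2) ^ 4 = (√(1 - w ^ 2) ^ 2) ^ 2 by ring, h2]
    ring
  rw [intervalIntegral.integral_congr e]
  have e2 : ∫ w in (0:ℝ)..1, (2 * (1 - w) * (π * (1 - w ^ 2) + (1 - w ^ 2) ^ 2 / 2))
      = 5 / 6 * π + 11 / 30 := by
    rw [intervalIntegral.integral_eq_sub_of_hasDerivAt
      (f := fun x => 2 * π * (x - x ^ 2 / 2 - x ^ 3 / 3 + x ^ 4 / 4)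
        + (x - 2 * x ^ 3 / 3 + x ^ 5 / 5) + (1 - x ^ 2) ^ 3 / 6) _
      (Continuous.intervalIntegrable (by fun_prop) _ _)]
    · norm_num; ring
    · intro x _
      refine HasDerivAt.congr_deriv ((((((hasDerivAt_id x).sub (((hasDerivAt_id x).pow 2).div_const 2)).sub
        (((hasDerivAt_id x).pow 3).div_const 3)).add
        (((hasDerivAt_id x).pow 4).div_const 4)).const_mul (2 * π)).add
        (((hasDerivAt_id x).sub ((((hasDerivAt_id x).pow 3).const_mul 2).div_const 3)).add
        (((hasDerivAt_id x).pow 5).div_const 5)) |>.add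
        (((hasDeriv_sq (x := x)).pow 3).div_const 6)) ?_
      simp; ring
  rw [intervalIntegral.integral_add (Continuous.intervalIntegrable (by fun_prop) _ _)
    (Continuous.intervalIntegrable (by fun_prop) _ _), intervalIntegral.integral_sub
    (Continuous.intervalIntegrable (by fun_prop) _ _)
    (Continuous.intervalIntegrable (by fun_prop) _ _), intervalIntegral.integral_const_mul,
    intervalIntegral.integral_const_mul, I_3, I_x3, e2]
  ring

lemma nu2_disc (r : ℝ) (h0 : 0 ≤ r) (h1 : r ≤ 1) :
    (nu.prod nu) {p | p.1 ^ 2 + p.2 ^ 2 ≤ r ^ 2} = ENNReal.ofReal (G r) := by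
  rw [Measure.prod_apply (measurableSet_le (by fun_prop) (by fun_prop)), ← I_G r h0]
  refine lint_nu' _ _ 0 r le_rfl h0 h1 (by fun_prop) ?_ ?_ ?_
  · intro x hx
    have ht : 0 ≤ r ^ 2 - x ^ 2 := by nlinarith [hx.1, hx.2]
    have ht1 : r ^ 2 - x ^ 2 ≤ 1 := by nlinarith [hx.1, hx.2]
    nlinarith [sq_sqrt ht, sqrt_nonneg (r ^ 2 - x ^ 2), Real.sqrt_le_one.2 ht1]
  · intro x hx
    have ht : 0 ≤ r ^ 2 - x ^ 2 := by nlinarith [hx.1, hx.2]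
    have ht1 : r ^ 2 - x ^ 2 ≤ 1 := by nlinarith [hx.1, hx.2]
    rw [← nu_sq _ ht ht1]
    congr 1
    ext y
    simp only [mem_preimage, mem_ofPred_eq]
    constructor <;> intro h <;> linarith
  · intro x hx h
    apply nu_null _ (measurable_prodMk_left (measurableSet_le (by fun_prop) (by fun_prop)))
    intro y _ hh
    simp only [mem_preimage, mem_ofPred_eq] at hh
    apply h
    refine ⟨hx.1, ?_⟩
    nlinarith [sq_nonneg y]

lemma nu3_ball : (nu.prod (nu.prod nu)) {q | q.1 ^ 2 + (q.2.1 ^ 2 + q.2.2 ^ 2) ≤ 1}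
    = ENNReal.ofReal (43 / 30 - π / 6) := by
  rw [Measure.prod_apply (measurableSet_le (by fun_prop) (by fun_prop)), ← I_F]
  refine lint_nu' _ _ 0 1 le_rfl zero_le_one le_rfl ?_ ?_ ?_ ?_
  · unfold G; fun_prop
  · intro x hx
    have h0 := sqrt_nonneg (1 - x ^ 2)
    have h1 : √(1 - x ^ 2) ≤ 1 := Real.sqrt_le_one.2 (by nlinarith [hx.1])
    generalize √(1 - x ^ 2) = s at *
    have : G s = s ^ 2 * (π - 8 / 3 * s + s ^ 2 / 2) := by unfold G; ring
    rw [this]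
    have : 0 ≤ π - 8 / 3 * s + s ^ 2 / 2 := by nlinarith [pi_gt_three]
    positivity
  · intro x hx
    have ht : 0 ≤ 1 - x ^ 2 := by nlinarith [hx.1, hx.2]
    have h1 : √(1 - x ^ 2) ≤ 1 := Real.sqrt_le_one.2 (by nlinarith [hx.1])
    rw [← nu2_disc _ (sqrt_nonneg _) h1, sq_sqrt ht]
    congr 1
    ext y
    simp only [mem_preimage, mem_ofPred_eq]
    constructor <;> intro h <;> linarith
  · intro x hx h
    exact absurd hx h

lemma I_tail (m : ℝ) : ∫ u in (1 - m)..1, 2 * (1 - u) * (1 - (2 - m - u)) ^ 2 = m ^ 4 / 6 := by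
  rw [intervalIntegral.integral_eq_sub_of_hasDerivAt
      (f := fun u => 2 * m * (u - (1 - m)) ^ 3 / 3 - (u - (1 - m)) ^ 4 / 2) _
      (Continuous.intervalIntegrable (by fun_prop) _ _)]
  · norm_num; ring
  · intro x _
    have hd : HasDerivAt (fun u : ℝ => u - (1 - m)) 1 x := (hasDerivAt_id x).sub_const _
    refine HasDerivAt.congr_deriv ((((hd.pow 3).const_mul (2 * m)).div_const 3).sub
      ((hd.pow 4).div_const 2)) ?_
    simp; ring

lemma nu2_tail (m : ℝ) (h0 : 0 ≤ m) (h1 : m ≤ 1) :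
    ∫⁻ u, nu (Ici (2 - m - u)) ∂nu = ENNReal.ofReal (m ^ 4 / 6) := by
  rw [← I_tail]
  refine lint_nu' _ _ (1 - m) 1 (by linarith) (by linarith) le_rfl (by fun_prop) ?_ ?_ ?_
  · intro x _; positivity
  · intro x hx
    exact nu_Ici _ (by linarith [hx.2]) (by linarith [hx.1])
  · intro x hx h
    apply nu_null _ measurableSet_Ici
    intro y hy hh
    rw [mem_Ici] at hh
    exact h ⟨by linarith [hy.2], hx.2⟩

lemma nu3_tail : (nu.prod (nu.prod nu)) {q | 2 < q.1 ^ 2 + (q.2.1 ^ 2 + q.2.2 ^ 2)}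
    ≤ ENNReal.ofReal (1 / 270) := by
  rw [Measure.prod_apply (measurableSet_lt (by fun_prop) (by fun_prop))]
  have : ∫⁻ w, ENNReal.ofReal ((w ^ 2) ^ 4 / 6) ∂nu = ENNReal.ofReal (1 / 270) := by
    rw [lint_nu' _ (fun w => (w ^ 2) ^ 4 / 6) 0 1 le_rfl zero_le_one le_rfl (by fun_prop)
      (fun x _ => by positivity) (fun x _ => rfl) (fun x hx h => absurd hx h)]
    rw [intervalIntegral.integral_eq_sub_of_hasDerivAt
      (f := fun u => u ^ 9 / 27 - u ^ 10 / 30) _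
      (Continuous.intervalIntegrable (by fun_prop) _ _)]
    · norm_num
    · intro x _
      refine HasDerivAt.congr_deriv ((((hasDerivAt_id x).pow 9).div_const 27).sub
        (((hasDerivAt_id x).pow 10).div_const 30)) ?_
      simp; ring
  rw [← this]
  apply lintegral_mono_ae
  filter_upwards [nu_ae] with w hw
  rw [Measure.prod_apply (measurable_prodMk_left (measurableSet_lt (by fun_prop) (by fun_prop))),
    ← nu2_tail (w ^ 2) (sq_nonneg w) (by nlinarith [hw.1, hw.2])]
  apply lintegral_mono_ae
  filter_upwards [nu_ae] with u hu
  apply measure_mono_ae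
  filter_upwards [nu_ae] with v hv h
  change 2 < w ^ 2 + (u ^ 2 + v ^ 2) at h
  change 2 - w ^ 2 - u ≤ v
  nlinarith [hu.1, hu.2, hv.1, hv.2]

lemma nu3_mid :
    ENNReal.ofReal (π / 6 - 13 / 30 - 1 / 270) ≤
    (nu.prod (nu.prod nu)) {q | 1 < q.1 ^ 2 + (q.2.1 ^ 2 + q.2.2 ^ 2) ∧
      q.1 ^ 2 + (q.2.1 ^ 2 + q.2.2 ^ 2) ≤ 2} ∧
    (nu.prod (nu.prod nu)) {q | 1 < q.1 ^ 2 + (q.2.1 ^ 2 + q.2.2 ^ 2) ∧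
      q.1 ^ 2 + (q.2.1 ^ 2 + q.2.2 ^ 2) ≤ 2} ≤ ENNReal.ofReal (π / 6 - 13 / 30) := by
  have hb := nu3_ball
  have ht := nu3_tail
  have hmA : MeasurableSet {q : ℝ × ℝ × ℝ | q.1 ^ 2 + (q.2.1 ^ 2 + q.2.2 ^ 2) ≤ 1} :=
    measurableSet_le (by fun_prop) (by fun_prop)
  have hc := prob_compl_eq_one_sub (μ := nu.prod (nu.prod nu)) hmA
  have hcc : (nu.prod (nu.prod nu)) {q | q.1 ^ 2 + (q.2.1 ^ 2 + q.2.2 ^ 2) ≤ 1}ᶜ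
      = ENNReal.ofReal (π / 6 - 13 / 30) := by
    rw [hc, hb, ← ENNReal.ofReal_one, ← ENNReal.ofReal_sub _ (by linarith [pi_lt_four])]
    congr 1; ring
  constructor
  · rw [ENNReal.ofReal_sub _ (by norm_num), ← hcc, tsub_le_iff_right]
    refine le_trans ?_ (add_le_add_right ht _)
    refine le_trans (measure_mono ?_) (measure_union_le _ _)
    intro q hq
    simp only [mem_compl_iff, mem_ofPred_eq, not_le, mem_union] at hq ⊢
    rcases le_or_gt (q.1 ^ 2 + (q.2.1 ^ 2 + q.2.2 ^ 2)) 2 with h | h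
    · exact Or.inl ⟨hq, h⟩
    · exact Or.inr h
  · rw [← hcc]
    apply measure_mono
    intro q hq
    simp only [mem_compl_iff, mem_ofPred_eq, not_le] at hq ⊢
    exact hq.1

lemma pi_to_prod (P : ℝ → Prop) (hP : MeasurableSet {x | P x}) :
    (Measure.pi fun _ : Fin 3 => nu) {u | P (∑ i, u i ^ 2)}
    = (nu.prod (nu.prod nu)) {q | P (q.1 ^ 2 + (q.2.1 ^ 2 + q.2.2 ^ 2))} := by
  have h1 := measurePreserving_piFinSuccAbove (fun _ : Fin 3 => nu) 0
  have h2 := (MeasurePreserving.id nu).prod (measurePreserving_finTwoArrow nu)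
  have h := h2.comp h1
  have hm : MeasurableSet {q : ℝ × ℝ × ℝ | P (q.1 ^ 2 + (q.2.1 ^ 2 + q.2.2 ^ 2))} := by
    have : Measurable (fun q : ℝ × ℝ × ℝ => q.1 ^ 2 + (q.2.1 ^ 2 + q.2.2 ^ 2)) := by fun_prop
    exact this hP
  rw [← h.measure_preimage hm.nullMeasurableSet]
  congr 1
  ext u
  simp only [mem_preimage, mem_ofPred_eq, Fin.sum_univ_three, ← add_assoc]
  rfl

lemma vol_one (P : ℝ → Prop) (hP : MeasurableSet {x | P x}) :
    volume {p : EuclideanSpace ℝ (Fin 3) × EuclideanSpace ℝ (Fin 3) |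
        p.1 ∈ cube 1 ∧ p.2 ∈ cube 1 ∧ P (dist p.1 p.2 ^ 2)}
    = (Measure.pi fun _ : Fin 3 => nu) {u | P (∑ i, u i ^ 2)} := by
  have hS : MeasurableSet {u : Fin 3 → ℝ | P (∑ i, u i ^ 2)} := by
    have : Measurable (fun u : Fin 3 → ℝ => ∑ i, u i ^ 2) := by fun_prop
    exact this hP
  have hf : Measurable (fun p : ℝ × ℝ => |p.1 - p.2|) := by fun_prop
  have hF : Measurable (fun (x : Fin 3 → ℝ × ℝ) i => |(x i).1 - (x i).2|) := by fun_prop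
  rw [← nu_eq]
  have : SigmaFinite (Measure.map (fun p : ℝ × ℝ => |p.1 - p.2|)
    ((volume : Measure (ℝ × ℝ)).restrict (Icc 0 1 ×ˢ Icc 0 1))) := by
    rw [nu_eq]; infer_instance
  rw [← Measure.pi_map_pi (μ := fun _ : Fin 3 =>
    (volume : Measure (ℝ × ℝ)).restrict (Icc 0 1 ×ˢ Icc 0 1))
    (f := fun _ (p : ℝ × ℝ) => |p.1 - p.2|) (fun _ => hf.aemeasurable),
    Measure.map_apply hF hS, ← Measure.restrict_pi_pi, Measure.restrict_apply (hF hS)]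
  have h1 := (volume_measurePreserving_arrowProdEquivProdArrow ℝ ℝ (Fin 3)).symm
  have h2 := (PiLp.volume_preserving_ofLp (Fin 3)).prod (PiLp.volume_preserving_ofLp (Fin 3))
  have h := h1.comp h2
  have hQ : MeasurableSet (univ.pi fun _ : Fin 3 => (Icc (0:ℝ) 1 ×ˢ Icc (0:ℝ) 1)) :=
    MeasurableSet.univ_pi fun _ => measurableSet_Icc.prod measurableSet_Icc
  refine Eq.trans ?_ (h.measure_preimage ((hF hS).inter hQ).nullMeasurableSet)
  congr 1
  ext p
  have hd : dist p.1 p.2 ^ 2 = ∑ i, |p.1 i - p.2 i| ^ 2 := by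
    rw [EuclideanSpace.dist_eq, sq_sqrt (Finset.sum_nonneg fun i _ => sq_nonneg _)]
    rfl
  simp only [mem_ofPred_eq, hd]
  constructor
  · rintro ⟨ha, hb, hc⟩
    exact ⟨hc, fun i _ => ⟨ha i, hb i⟩⟩
  · rintro ⟨hc, hab⟩
    exact ⟨fun i => (hab i trivial).1, fun i => (hab i trivial).2, hc⟩

lemma vol_scale (a : ℝ) (ha : 0 < a) :
    volume {p : EuclideanSpace ℝ (Fin 3) × EuclideanSpace ℝ (Fin 3) |
        p.1 ∈ cube a ∧ p.2 ∈ cube a ∧ a < dist p.1 p.2 ∧ dist p.1 p.2 ≤ Real.sqrt 2 * a}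
    = ENNReal.ofReal (a ^ 6) * volume {p : EuclideanSpace ℝ (Fin 3) × EuclideanSpace ℝ (Fin 3) |
        p.1 ∈ cube 1 ∧ p.2 ∈ cube 1 ∧ (1 < dist p.1 p.2 ^ 2 ∧ dist p.1 p.2 ^ 2 ≤ 2)} := by
  have : ((volume : Measure (EuclideanSpace ℝ (Fin 3))).prod
      (volume : Measure (EuclideanSpace ℝ (Fin 3)))).IsAddHaarMeasure := inferInstance
  rw [← Measure.volume_eq_prod] at this
  have h := Measure.addHaar_smul (volume : Measure (EuclideanSpace ℝ (Fin 3) × EuclideanSpace ℝ (Fin 3)))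
    a {p | p.1 ∈ cube 1 ∧ p.2 ∈ cube 1 ∧ (1 < dist p.1 p.2 ^ 2 ∧ dist p.1 p.2 ^ 2 ≤ 2)}
  have hr : Module.finrank ℝ (EuclideanSpace ℝ (Fin 3) × EuclideanSpace ℝ (Fin 3)) = 6 := by
    simp
  rw [hr, abs_of_pos (by positivity)] at h
  rw [← h]
  congr 1
  ext p
  rw [mem_smul_set_iff_inv_smul_mem₀ ha.ne']
  have hc : ∀ x : EuclideanSpace ℝ (Fin 3), a⁻¹ • x ∈ cube 1 ↔ x ∈ cube a := by
    intro x
    refine forall_congr' fun i => ?_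
    simp only [PiLp.smul_apply, smul_eq_mul, mem_Icc]
    rw [inv_mul_le_iff₀ ha, mul_one, le_inv_mul_iff₀ ha, mul_zero]
  have hd : dist (a⁻¹ • p.1) (a⁻¹ • p.2) = dist p.1 p.2 / a := by
    rw [dist_smul₀, Real.norm_of_nonneg (by positivity)]; field_simp
  simp only [mem_ofPred_eq, Prod.smul_fst, Prod.smul_snd, hc, hd]
  have hn : 0 ≤ dist p.1 p.2 / a := by positivity
  rw [one_lt_sq_iff₀ hn, one_lt_div ha, ← Real.le_sqrt hn (by norm_num), div_le_iff₀ ha]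

theorem volume_pairs_middle_range (a : ℝ) (ha : 0 < a) :
    ENNReal.ofReal (0.085 * a ^ 6) <
      volume {p : EuclideanSpace ℝ (Fin 3) × EuclideanSpace ℝ (Fin 3) |
        p.1 ∈ cube a ∧ p.2 ∈ cube a ∧ a < dist p.1 p.2 ∧ dist p.1 p.2 ≤ Real.sqrt 2 * a} ∧
    volume {p : EuclideanSpace ℝ (Fin 3) × EuclideanSpace ℝ (Fin 3) |
        p.1 ∈ cube a ∧ p.2 ∈ cube a ∧ a < dist p.1 p.2 ∧ dist p.1 p.2 ≤ Real.sqrt 2 * a} <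
      ENNReal.ofReal (0.095 * a ^ 6) := by
  have hP : MeasurableSet {x : ℝ | 1 < x ∧ x ≤ 2} := measurableSet_Ioc
  have h6 : 0 < a ^ 6 := by positivity
  rw [vol_scale a ha, vol_one (fun x => 1 < x ∧ x ≤ 2) hP, pi_to_prod (fun x => 1 < x ∧ x ≤ 2) hP]
  obtain ⟨h1, h2⟩ := nu3_mid
  have p1 := pi_gt_d4
  have p2 := pi_lt_d4
  constructor
  · refine lt_of_lt_of_le ?_ (mul_le_mul_right h1 _)
    rw [← ENNReal.ofReal_mul h6.le, ENNReal.ofReal_lt_ofReal_iff_of_nonneg (by positivity)]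
    nlinarith
  · refine lt_of_le_of_lt (mul_le_mul_right h2 _) ?_
    rw [← ENNReal.ofReal_mul h6.le, ENNReal.ofReal_lt_ofReal_iff (by positivity)]
    nlinarith
end

section
/- For every l with 0 ≤ l ≤ a, the iterated integral ∫₀^{π/2} ∫₀^{π/2} (a − l·cosθ·cosφ)(a − l·cosθ·sinφ)(a − l·sinθ)·l²·cosθ dφ dθ equals (l²/8)·(4πa³ − 6πa²l + 8al² − l³). -/
open MeasureTheory Real Set intervalIntegral

theorem angular_integral_first_range (a : ℝ) (ha : 0 < a) (l : ℝ)
    (hl0 : 0 ≤ l) (hla : l ≤ a) :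
    (∫ θ in (0:ℝ)..(π / 2), ∫ φ in (0:ℝ)..(π / 2),
        (a - l * Real.cos θ * Real.cos φ) * (a - l * Real.cos θ * Real.sin φ) *
          (a - l * Real.sin θ) * l ^ 2 * Real.cos θ) =
      l ^ 2 / 8 * (4 * π * a ^ 3 - 6 * π * a ^ 2 * l + 8 * a * l ^ 2 - l ^ 3) := by
  have inner : ∀ θ : ℝ, (∫ φ in (0:ℝ)..(π / 2),
        (a - l * Real.cos θ * Real.cos φ) * (a - l * Real.cos θ * Real.sin φ) *
          (a - l * Real.sin θ) * l ^ 2 * Real.cos θ) =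
      (a ^ 2 * (π / 2) - 2 * a * l * Real.cos θ + l ^ 2 * Real.cos θ ^ 2 / 2) *
        ((a - l * Real.sin θ) * l ^ 2 * Real.cos θ) := by
    intro θ
    rw [integral_eq_sub_of_hasDerivAt (f := fun φ =>
      (a ^ 2 * φ - a * l * Real.cos θ * (Real.sin φ - Real.cos φ)
        + l ^ 2 * Real.cos θ ^ 2 / 2 * Real.sin φ ^ 2) *
        ((a - l * Real.sin θ) * l ^ 2 * Real.cos θ))]
    · simp only [Real.sin_pi_div_two, Real.cos_pi_div_two, Real.sin_zero, Real.cos_zero]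
      ring
    · intro φ _
      have hs := Real.hasDerivAt_sin φ
      have hc := Real.hasDerivAt_cos φ
      refine (((((hasDerivAt_id φ).const_mul (a ^ 2)).sub
        ((hs.sub hc).const_mul (a * l * Real.cos θ))).add
        ((hs.pow 2).const_mul (l ^ 2 * Real.cos θ ^ 2 / 2))).mul_const
        ((a - l * Real.sin θ) * l ^ 2 * Real.cos θ)).congr_deriv ?_
      push_cast
      ring
    · exact Continuous.intervalIntegrable (by fun_prop) _ _
  simp_rw [inner]
  rw [integral_eq_sub_of_hasDerivAt (f := fun θ =>
      l ^ 2 * a ^ 3 * π / 2 * Real.sin θ - l ^ 3 * a ^ 2 * (θ + Real.sin θ * Real.cos θ)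
      + l ^ 4 * a / 2 * (Real.sin θ - 1 / 3 * Real.sin θ ^ 3)
      - l ^ 3 * a ^ 2 * π / 4 * Real.sin θ ^ 2
      - 2 * a * l ^ 4 / 3 * Real.cos θ ^ 3 + l ^ 5 / 8 * Real.cos θ ^ 4)]
  · simp only [Real.sin_pi_div_two, Real.cos_pi_div_two, Real.sin_zero, Real.cos_zero]
    ring
  · intro θ _
    have hs := Real.hasDerivAt_sin θ
    have hc := Real.hasDerivAt_cos θ
    refine ((((((hs.const_mul (l ^ 2 * a ^ 3 * π / 2)).sub
      (((hasDerivAt_id θ).add (hs.mul hc)).const_mul (l ^ 3 * a ^ 2))).add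
      ((hs.sub ((hs.pow 3).const_mul (1 / 3))).const_mul (l ^ 4 * a / 2))).sub
      ((hs.pow 2).const_mul (l ^ 3 * a ^ 2 * π / 4))).sub
      ((hc.pow 3).const_mul (2 * a * l ^ 4 / 3))).add
      ((hc.pow 4).const_mul (l ^ 5 / 8))).congr_deriv ?_
    push_cast
    have h := Real.sin_sq_add_cos_sq θ
    have h2 : Real.sin θ ^ 2 = 1 - Real.cos θ ^ 2 := by linarith
    ring_nf
    simp only [h2]
    ring
  · exact Continuous.intervalIntegrable (by fun_prop) _ _
end

section
/- For every l with a < l < √2·a, writing φ₁(θ) = arccos(a/(l·cosθ)) and φ₂(θ) = arcsin(a/(l·cosθ)), the sum of iterated integrals l²·[ ∫_{arccos(a/l)}^{arcsin(a/l)} cosθ·(a − l·sinθ)·( ∫₀^{π/2} (a − l·cosθ·cosφ)(a − l·cosθ·sinφ) dφ ) dθ + ∫₀^{arccos(a/l)} cosθ·(a − l·sinθ)·( ∫_{φ₁(θ)}^{φ₂(θ)} (a − l·cosθ·cosφ)(a − l·cosθ·sinφ) dφ ) dθ ] equals (l/8)·[2l⁴ + 6a²l² − a⁴ − 2πa³(4l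 − 3a) − 8a(2l² + a²)·√(l² − a²) + 24a²l²·arccos(a/l)]. -/
open MeasureTheory Real Set intervalIntegral

lemma aux_arcsin {f : ℝ → ℝ} {f' x w : ℝ} (hf : HasDerivAt f f' x) (hw : 0 < w)
    (h : f x ^ 2 + w ^ 2 = 1) : HasDerivAt (fun y => Real.arcsin (f y)) (f' / w) x := by
  have e : √(1 - f x ^ 2) = w := by
    rw [show 1 - f x ^ 2 = w ^ 2 by linarith, Real.sqrt_sq hw.le]
  have n1 : f x ≠ -1 := by intro h0; rw [h0] at h; nlinarith [pow_pos hw 2]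
  have n2 : f x ≠ 1 := by intro h0; rw [h0] at h; nlinarith [pow_pos hw 2]
  have := (Real.hasDerivAt_arcsin n1 n2).comp x hf
  rw [e] at this
  convert! this using 1
  ring

lemma aux_arccos {f : ℝ → ℝ} {f' x w : ℝ} (hf : HasDerivAt f f' x) (hw : 0 < w)
    (h : f x ^ 2 + w ^ 2 = 1) : HasDerivAt (fun y => Real.arccos (f y)) (-(f' / w)) x :=
  (aux_arcsin hf hw h).const_sub (π / 2)

lemma aux_inner (a r p q : ℝ) :
    ∫ φ in p..q, (a - r * Real.cos φ) * (a - r * Real.sin φ) =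
      (a ^ 2 * q - a * r * sin q + a * r * cos q + r ^ 2 * sin q ^ 2 / 2) -
      (a ^ 2 * p - a * r * sin p + a * r * cos p + r ^ 2 * sin p ^ 2 / 2) := by
  refine integral_eq_sub_of_hasDerivAt
    (f := fun φ => a ^ 2 * φ - a * r * sin φ + a * r * cos φ + r ^ 2 * sin φ ^ 2 / 2) ?_ ?_
  · intro x _
    have := ((((hasDerivAt_id x).const_mul (a ^ 2)).sub ((hasDerivAt_sin x).const_mul (a * r))).add
      ((hasDerivAt_cos x).const_mul (a * r))).add
      ((((hasDerivAt_sin x).pow 2).const_mul (r ^ 2)).div_const 2)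
    convert! this using 1
    push_cast
    ring
  · apply Continuous.intervalIntegrable
    fun_prop

lemma aux_inner2 (a r : ℝ) (ha : 0 < a) (hr : a ≤ r) :
    ∫ φ in Real.arccos (a / r)..Real.arcsin (a / r), (a - r * Real.cos φ) * (a - r * Real.sin φ) =
      a ^ 2 * π / 2 - 2 * a ^ 2 * arccos (a / r) - a ^ 2 + 2 * a * √(r ^ 2 - a ^ 2) - r ^ 2 / 2 := by
  have hr0 : 0 < r := by linarith
  have hle : a / r ≤ 1 := (div_le_one hr0).2 hr
  have hge : -1 ≤ a / r := by have := div_pos ha hr0; linarith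
  have hs : √(1 - (a / r) ^ 2) = √(r ^ 2 - a ^ 2) / r := by
    rw [show 1 - (a / r) ^ 2 = (r ^ 2 - a ^ 2) / r ^ 2 by field_simp,
      Real.sqrt_div' _ (by positivity), Real.sqrt_sq hr0.le]
  have hsq : √(r ^ 2 - a ^ 2) ^ 2 = r ^ 2 - a ^ 2 := Real.sq_sqrt (by nlinarith)
  rw [aux_inner, Real.sin_arcsin hge hle, Real.cos_arcsin, Real.cos_arccos hge hle,
    Real.sin_arccos, hs, Real.arcsin_eq_pi_div_two_sub_arccos]
  generalize √(r ^ 2 - a ^ 2) = s at *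
  field_simp
  linear_combination (-1) * hsq

lemma aux_outer1 (a l p q : ℝ) :
    ∫ θ in p..q, cos θ * (a - l * sin θ) *
        (a ^ 2 * π / 2 - 2 * a * (l * cos θ) + (l * cos θ) ^ 2 / 2) =
      (a ^ 3 * π / 2 * sin q - a ^ 2 * l * (sin q * cos q + q) + a * l ^ 2 / 2 * (sin q - sin q ^ 3 / 3)
        + a ^ 2 * π / 4 * l * cos q ^ 2 - 2 / 3 * a * l ^ 2 * cos q ^ 3 + l ^ 3 * cos q ^ 4 / 8) -
      (a ^ 3 * π / 2 * sin p - a ^ 2 * l * (sin p * cos p + p) + a * l ^ 2 / 2 * (sin p - sin p ^ 3 / 3)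
        + a ^ 2 * π / 4 * l * cos p ^ 2 - 2 / 3 * a * l ^ 2 * cos p ^ 3 + l ^ 3 * cos p ^ 4 / 8) := by
  refine integral_eq_sub_of_hasDerivAt
    (f := fun q => a ^ 3 * π / 2 * sin q - a ^ 2 * l * (sin q * cos q + q) + a * l ^ 2 / 2 * (sin q - sin q ^ 3 / 3)
        + a ^ 2 * π / 4 * l * cos q ^ 2 - 2 / 3 * a * l ^ 2 * cos q ^ 3 + l ^ 3 * cos q ^ 4 / 8) ?_ ?_
  · intro x _
    have hS := hasDerivAt_sin x
    have hC := hasDerivAt_cos x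
    have := (((((hS.const_mul (a ^ 3 * π / 2)).sub
      (((hS.mul hC).add (hasDerivAt_id x)).const_mul (a ^ 2 * l))).add
      ((hS.sub ((hS.pow 3).div_const 3)).const_mul (a * l ^ 2 / 2))).add
      ((hC.pow 2).const_mul (a ^ 2 * π / 4 * l))).sub
      ((hC.pow 3).const_mul (2 / 3 * a * l ^ 2))).add
      (((hC.pow 4).const_mul (l ^ 3)).div_const 8)
    convert! this using 1
    push_cast
    have h := sin_sq_add_cos_sq x
    simp only [Nat.add_one_sub_one, pow_one]
    have h' : sin x ^ 2 = 1 - cos x ^ 2 := by linarith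
    ring_nf
    simp only [h']
    ring
  · apply Continuous.intervalIntegrable
    fun_prop

lemma aux_outer2 (a l b : ℝ) (ha : 0 < a) (hl : a < l) (hb : 0 < b) (hbl : b ^ 2 = l ^ 2 - a ^ 2) :
    ∫ θ in (0:ℝ)..arccos (a / l), cos θ * (a - l * sin θ) *
        (a ^ 2 * π / 2 - 2 * a ^ 2 * arccos (a / (l * cos θ)) - a ^ 2
          + 2 * a * √((l * cos θ) ^ 2 - a ^ 2) - (l * cos θ) ^ 2 / 2) =
      (a ^ 3 * (π / 2 - 1) * (b / l) - a * l ^ 2 / 2 * (b / l - (b / l) ^ 3 / 3)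
        - 2 * a ^ 3 * (π / 2 - a / l * (π / 2)) + a ^ 2 * (b ^ 2 / l * (π / 2))
        + 1 / l * (a ^ 2 * (π / 2 - 1) * a ^ 2 / 2 - a ^ 4 / 8)) -
      1 / l * (a ^ 2 * (π / 2 - 1) * l ^ 2 / 2 - l ^ 4 / 8 + 2 * a * b ^ 3 / 3
        - a ^ 2 * l ^ 2 * arccos (a / l) + a ^ 3 * b) := by
  have hl0 : 0 < l := by linarith
  have hle : a / l ≤ 1 := (div_le_one hl0).2 hl.le
  have hpos := div_pos ha hl0
  have hge : -1 ≤ a / l := by linarith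
  have hb1 : √(1 - (a / l) ^ 2) = b / l := by
    rw [show 1 - (a / l) ^ 2 = (b / l) ^ 2 by field_simp; linarith, Real.sqrt_sq (by positivity)]
  have hα : arccos (a / l) < π / 2 := Real.arccos_lt_pi_div_two.2 hpos
  have hcos : ∀ x ∈ Icc 0 (arccos (a / l)), a / l ≤ cos x := by
    intro x hx
    have := Real.cos_le_cos_of_nonneg_of_le_pi hx.1 (Real.arccos_le_pi _) hx.2
    rwa [Real.cos_arccos hge hle] at this
  have hcos0 : ∀ x ∈ Icc 0 (arccos (a / l)), cos x ≠ 0 := fun x hx =>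
    (lt_of_lt_of_le hpos (hcos x hx)).ne'
  have hlcos0 : ∀ x ∈ Icc 0 (arccos (a / l)), l * cos x ≠ 0 := fun x hx =>
    mul_ne_zero hl0.ne' (hcos0 x hx)
  set F : ℝ → ℝ := fun x =>
    a ^ 3 * (π / 2 - 1) * sin x - a * l ^ 2 / 2 * (sin x - sin x ^ 3 / 3)
    - 2 * a ^ 3 * (sin x * arccos (a / (l * cos x)) + arcsin (a * (sin x / cos x) / b)
        - a / l * arcsin (l * sin x / b))
    + a ^ 2 * (sin x * √((l * cos x) ^ 2 - a ^ 2) + b ^ 2 / l * arcsin (l * sin x / b))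
    + 1 / l * (a ^ 2 * (π / 2 - 1) * (l * cos x) ^ 2 / 2 - (l * cos x) ^ 4 / 8
        + 2 * a * √((l * cos x) ^ 2 - a ^ 2) ^ 3 / 3
        - a ^ 2 * (l * cos x) ^ 2 * arccos (a / (l * cos x))
        + a ^ 3 * √((l * cos x) ^ 2 - a ^ 2)) with hF
  have cA : ContinuousOn (fun x => arccos (a / (l * cos x))) (Icc 0 (arccos (a / l))) :=
    Real.continuous_arccos.comp_continuousOn
      (ContinuousOn.div (by fun_prop) (by fun_prop) hlcos0)
  have cT : ContinuousOn (fun x => arcsin (a * (sin x / cos x) / b)) (Icc 0 (arccos (a / l))) := by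
    refine Real.continuous_arcsin.comp_continuousOn (ContinuousOn.div_const ?_ _)
    exact continuousOn_const.mul (ContinuousOn.div (by fun_prop) (by fun_prop) hcos0)
  have cS : Continuous (fun x => arcsin (l * sin x / b)) :=
    Real.continuous_arcsin.comp (by fun_prop)
  have key := integral_eq_sub_of_hasDerivAt_of_le (a := 0) (b := arccos (a / l)) (f := F)
    (f' := fun θ => cos θ * (a - l * sin θ) *
        (a ^ 2 * π / 2 - 2 * a ^ 2 * arccos (a / (l * cos θ)) - a ^ 2
          + 2 * a * √((l * cos θ) ^ 2 - a ^ 2) - (l * cos θ) ^ 2 / 2))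
    (Real.arccos_nonneg _) (by rw [hF]; fun_prop) ?_ ?_
  · rw [key, hF]
    simp only [Real.cos_arccos hge hle, Real.sin_arccos, hb1, Real.sin_zero, Real.cos_zero]
    rw [show l * (a / l) = a by field_simp, show a * (b / l / (a / l)) / b = 1 by field_simp,
      show l * (b / l) / b = 1 by field_simp, div_self ha.ne', sub_self, Real.sqrt_zero,
      Real.arccos_one, Real.arcsin_one, mul_one, ← hbl, Real.sqrt_sq hb.le]
    simp only [mul_zero, zero_div, Real.arcsin_zero]
    ring
  · intro x hx
    have hx' := Ioo_subset_Icc_self hx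
    have hc : a / l < cos x := by
      have := Real.cos_lt_cos_of_nonneg_of_le_pi hx.1.le (Real.arccos_le_pi _) hx.2
      rwa [Real.cos_arccos hge hle] at this
    have hcp : 0 < cos x := hpos.trans hc
    have hac : a < l * cos x := by rwa [div_lt_iff₀' hl0] at hc
    have hlc : 0 < l * cos x := by positivity
    have hq : 0 < (l * cos x) ^ 2 - a ^ 2 := by nlinarith
    have hs : 0 < √((l * cos x) ^ 2 - a ^ 2) := Real.sqrt_pos.2 hq
    have hsq : √((l * cos x) ^ 2 - a ^ 2) ^ 2 = (l * cos x) ^ 2 - a ^ 2 := Real.sq_sqrt hq.le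
    have h := sin_sq_add_cos_sq x
    have hS := hasDerivAt_sin x
    have hC := hasDerivAt_cos x
    have hR := hC.const_mul l
    have dQ := ((hR.pow 2).sub_const (a ^ 2)).sqrt hq.ne'
    set s := √((l * cos x) ^ 2 - a ^ 2) with hsdef
    have dA := aux_arccos (w := s / (l * cos x)) ((hasDerivAt_const x a).div hR hlc.ne') (by positivity)
      (by simp only [Pi.div_apply]; field_simp; linear_combination hsq)
    have dT := aux_arcsin (w := s / (b * cos x)) (((hS.div hC hcp.ne').const_mul a).div_const b) (by positivity)
      (by simp only [Pi.div_apply]; field_simp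
          linear_combination hsq + a ^ 2 * h - cos x ^ 2 * hbl)
    have dS := aux_arcsin (w := s / b) ((hS.const_mul l).div_const b) (by positivity)
      (by field_simp; linear_combination hsq + l ^ 2 * h - hbl)
    have dQ' : HasDerivAt (fun x => √((l * cos x) ^ 2 - a ^ 2)) (-(l ^ 2 * cos x * sin x) / s) x := by
      convert! dQ using 1
      simp only [Pi.pow_apply]
      rw [← hsdef]
      field_simp
      push_cast
      ring
    have dA' : HasDerivAt (fun x => arccos (a / (l * cos x))) (-(a * sin x) / (cos x * s)) x := by
      convert! dA using 1
      field_simp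
      try ring
    have dT' : HasDerivAt (fun x => arcsin (a * (sin x / cos x) / b)) (a / (cos x * s)) x := by
      convert! dT using 1
      field_simp
      linear_combination -h
    have dS' : HasDerivAt (fun x => arcsin (l * sin x / b)) (l * cos x / s) x := by
      convert! dS using 1
      field_simp
    have := ((((hS.const_mul (a ^ 3 * (π / 2 - 1))).sub
      ((hS.sub ((hS.pow 3).div_const 3)).const_mul (a * l ^ 2 / 2))).sub
      ((((hS.mul dA').add dT').sub (dS'.const_mul (a / l))).const_mul (2 * a ^ 3))).add
      (((hS.mul dQ').add (dS'.const_mul (b ^ 2 / l))).const_mul (a ^ 2))).add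
      (((((((hR.pow 2).const_mul (a ^ 2 * (π / 2 - 1))).div_const 2).sub ((hR.pow 4).div_const 8)).add
        (((dQ'.pow 3).const_mul (2 * a)).div_const 3)).sub
        (((hR.pow 2).const_mul (a ^ 2)).mul dA') |>.add (dQ'.const_mul (a ^ 3))).const_mul (1 / l))
    convert! this using 1
    simp only [Pi.pow_apply]
    rw [← hsdef]
    have h' : sin x ^ 2 = 1 - cos x ^ 2 := by linarith
    have hl2 : b ^ 2 = l ^ 2 - a ^ 2 := hbl
    generalize arccos (a / (l * cos x)) = A
    push_cast
    simp only [Nat.add_one_sub_one, pow_one]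
    rw [hl2]
    clear_value s
    generalize sin x = S at *
    generalize cos x = c at *
    field_simp
    have s3 : s ^ 3 = s * ((l * c) ^ 2 - a ^ 2) := by rw [← hsq]; ring
    have s4 : s ^ 4 = ((l * c) ^ 2 - a ^ 2) ^ 2 := by rw [← hsq]; ring
    have S3 : S ^ 3 = S * (1 - c ^ 2) := by rw [← h']; ring
    have S4 : S ^ 4 = (1 - c ^ 2) ^ 2 := by rw [← h']; ring
    ring_nf
    simp only [hsq, s3, s4, h', S3, S4]
    ring
  · apply ContinuousOn.intervalIntegrable
    rw [uIcc_of_le (Real.arccos_nonneg _)]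
    fun_prop

theorem angular_integral_second_range (a : ℝ) (ha : 0 < a) (l : ℝ)
    (h1 : a < l) (h2 : l < Real.sqrt 2 * a) :
    l ^ 2 *
      ((∫ θ in Real.arccos (a / l)..Real.arcsin (a / l),
          Real.cos θ * (a - l * Real.sin θ) *
            ∫ φ in (0:ℝ)..(π / 2),
              (a - l * Real.cos θ * Real.cos φ) * (a - l * Real.cos θ * Real.sin φ)) +
        ∫ θ in (0:ℝ)..Real.arccos (a / l),
          Real.cos θ * (a - l * Real.sin θ) *
            ∫ φ in Real.arccos (a / (l * Real.cos θ))..Real.arcsin (a / (l * Real.cos θ)),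
              (a - l * Real.cos θ * Real.cos φ) * (a - l * Real.cos θ * Real.sin φ)) =
      l / 8 *
        (2 * l ^ 4 + 6 * a ^ 2 * l ^ 2 - a ^ 4 - 2 * π * a ^ 3 * (4 * l - 3 * a)
          - 8 * a * (2 * l ^ 2 + a ^ 2) * Real.sqrt (l ^ 2 - a ^ 2)
          + 24 * a ^ 2 * l ^ 2 * Real.arccos (a / l)) := by
  have hl0 : 0 < l := by linarith
  have hle : a / l ≤ 1 := (div_le_one hl0).2 h1.le
  have hpos := div_pos ha hl0
  have hge : -1 ≤ a / l := by linarith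
  have hq : 0 < l ^ 2 - a ^ 2 := by nlinarith
  have hb : 0 < √(l ^ 2 - a ^ 2) := Real.sqrt_pos.2 hq
  have hbl : √(l ^ 2 - a ^ 2) ^ 2 = l ^ 2 - a ^ 2 := Real.sq_sqrt hq.le
  set b := √(l ^ 2 - a ^ 2) with hbdef
  have hb1 : √(1 - (a / l) ^ 2) = b / l := by
    rw [show 1 - (a / l) ^ 2 = (b / l) ^ 2 by field_simp; linarith, Real.sqrt_sq (by positivity)]
  have e1 : (∫ θ in Real.arccos (a / l)..Real.arcsin (a / l),
          Real.cos θ * (a - l * Real.sin θ) *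
            ∫ φ in (0:ℝ)..(π / 2),
              (a - l * Real.cos θ * Real.cos φ) * (a - l * Real.cos θ * Real.sin φ)) =
      ∫ θ in Real.arccos (a / l)..Real.arcsin (a / l), cos θ * (a - l * sin θ) *
        (a ^ 2 * π / 2 - 2 * a * (l * cos θ) + (l * cos θ) ^ 2 / 2) := by
    congr 1
    ext θ
    rw [aux_inner]
    simp only [Real.sin_pi_div_two, Real.cos_pi_div_two, Real.sin_zero, Real.cos_zero]
    ring
  have e2 : (∫ θ in (0:ℝ)..Real.arccos (a / l),
          Real.cos θ * (a - l * Real.sin θ) *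
            ∫ φ in Real.arccos (a / (l * Real.cos θ))..Real.arcsin (a / (l * Real.cos θ)),
              (a - l * Real.cos θ * Real.cos φ) * (a - l * Real.cos θ * Real.sin φ)) =
      ∫ θ in (0:ℝ)..arccos (a / l), cos θ * (a - l * sin θ) *
        (a ^ 2 * π / 2 - 2 * a ^ 2 * arccos (a / (l * cos θ)) - a ^ 2
          + 2 * a * √((l * cos θ) ^ 2 - a ^ 2) - (l * cos θ) ^ 2 / 2) := by
    apply intervalIntegral.integral_congr
    intro θ hθ
    rw [uIcc_of_le (Real.arccos_nonneg _)] at hθ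
    have hc := Real.cos_le_cos_of_nonneg_of_le_pi hθ.1 (Real.arccos_le_pi _) hθ.2
    rw [Real.cos_arccos hge hle, div_le_iff₀' hl0] at hc
    simp only
    rw [aux_inner2 a (l * cos θ) ha hc]
  rw [e1, e2, aux_outer1, aux_outer2 a l b ha h1 hb hbl, Real.sin_arcsin hge hle, Real.cos_arcsin,
    Real.cos_arccos hge hle, Real.sin_arccos, hb1, Real.arcsin_eq_pi_div_two_sub_arccos]
  have hb4 : b ^ 4 = (l ^ 2 - a ^ 2) ^ 2 := by rw [← hbl]; ring
  have hb3 : b ^ 3 = b * (l ^ 2 - a ^ 2) := by rw [← hbl]; ring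
  clear_value b
  field_simp
  ring_nf
  simp only [hbl, hb3, hb4]
  ring
end

section
/- For every l with √2·a < l < √3·a, writing φ₁(θ) = arccos(a/(l·cosθ)) and φ₂(θ) = arcsin(a/(l·cosθ)), the iterated integral l²·∫_{arccos(√2·a/l)}^{arcsin(a/l)} cosθ·(a − l·sinθ)·( ∫_{φ₁(θ)}^{φ₂(θ)} (a − l·cosθ·cosφ)(a − l·cosθ·sinφ) dφ ) dθ equals (l/8)·[8a(l² + a²)·√(l² − 2a²) − (l² + a²)(l² + 5a²) + 2πa²(3l² − 4al + 3a²) + 24a³l·arccos(a²/(l² − a²)) − 24a²(l² + a²)·arccos(a/√(l² − a²))]. -/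
open MeasureTheory Real Set intervalIntegral

lemma ang_inner (a r : ℝ) (ha : 0 < a) (hr : a < r) :
    (∫ φ in Real.arccos (a / r)..Real.arcsin (a / r),
      (a - r * Real.cos φ) * (a - r * Real.sin φ)) =
    a ^ 2 * (π / 2 - 2 * Real.arccos (a / r)) - a ^ 2 - r ^ 2 / 2
      + 2 * a * Real.sqrt (r ^ 2 - a ^ 2) := by
  have hr0 : 0 < r := ha.trans hr
  have key : ∀ φ : ℝ, HasDerivAt (fun φ => a ^ 2 * φ - a * r * Real.sin φ + a * r * Real.cos φ
      + r ^ 2 / 2 * Real.sin φ ^ 2) ((a - r * Real.cos φ) * (a - r * Real.sin φ)) φ := by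
    intro φ
    have h := ((((hasDerivAt_id φ).const_mul (a ^ 2)).sub
      ((Real.hasDerivAt_sin φ).const_mul (a * r))).add
      ((Real.hasDerivAt_cos φ).const_mul (a * r))).add
      (((Real.hasDerivAt_sin φ).pow 2).const_mul (r ^ 2 / 2))
    refine h.congr_deriv ?_
    simp
    ring
  rw [integral_eq_sub_of_hasDerivAt (fun φ _ => key φ)
    (Continuous.intervalIntegrable (by fun_prop) _ _)]
  have c1 : a / r ≤ 1 := (div_le_one hr0).2 hr.le
  have c0 : -1 ≤ a / r := by have : 0 < a / r := by positivity
                             linarith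
  have hs : Real.sqrt (1 - (a / r) ^ 2) = Real.sqrt (r ^ 2 - a ^ 2) / r := by
    rw [show 1 - (a / r) ^ 2 = (r ^ 2 - a ^ 2) / r ^ 2 by field_simp,
      Real.sqrt_div' _ (by positivity), Real.sqrt_sq hr0.le]
  have hw : Real.sqrt (r ^ 2 - a ^ 2) ^ 2 = r ^ 2 - a ^ 2 := Real.sq_sqrt (by nlinarith)
  rw [Real.sin_arcsin c0 c1, Real.cos_arccos c0 c1, Real.sin_arccos, Real.cos_arcsin, hs,
    Real.arcsin_eq_pi_div_two_sub_arccos]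
  set w := Real.sqrt (r ^ 2 - a ^ 2)
  field_simp
  linear_combination (-1) * hw

noncomputable def angF (a l u : ℝ) : ℝ :=
  a ^ 2 * (π / 2 - 1) * (a * u - u ^ 2 / 2)
  - (a * l ^ 2 * u - l ^ 2 * u ^ 2 / 2 - a * u ^ 3 / 3 + u ^ 4 / 4) / 2
  + a ^ 2 * (u * Real.sqrt (l ^ 2 - a ^ 2 - u ^ 2))
  + a ^ 2 * (l ^ 2 + a ^ 2) * Real.arcsin (u / Real.sqrt (l ^ 2 - a ^ 2))
  + 2 * a / 3 * Real.sqrt (l ^ 2 - a ^ 2 - u ^ 2) ^ 3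
  - 2 * a ^ 2 * ((a * u + (l ^ 2 - u ^ 2) / 2) * Real.arccos (a / Real.sqrt (l ^ 2 - u ^ 2)))
  - 2 * a ^ 3 * l * Real.arctan (a * u / (l * Real.sqrt (l ^ 2 - a ^ 2 - u ^ 2)))
  + a ^ 3 * Real.sqrt (l ^ 2 - a ^ 2 - u ^ 2)

lemma angF_deriv (a l u : ℝ) (ha : 0 < a) (hl : 0 < l) (hu : 0 < l ^ 2 - a ^ 2 - u ^ 2) :
    HasDerivAt (angF a l) ((a - u) * (a ^ 2 * (π / 2 - 2 * Real.arccos (a / Real.sqrt (l ^ 2 - u ^ 2)))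
      - a ^ 2 - (l ^ 2 - u ^ 2) / 2 + 2 * a * Real.sqrt (l ^ 2 - a ^ 2 - u ^ 2))) u := by
  have hid := hasDerivAt_id u
  have hp : ∀ n : ℕ, HasDerivAt (fun u : ℝ => u ^ n) (n * u ^ (n - 1)) u := fun n => hasDerivAt_pow n u
  have hw0 : 0 < Real.sqrt (l ^ 2 - a ^ 2 - u ^ 2) := Real.sqrt_pos.2 hu
  have hwsq : Real.sqrt (l ^ 2 - a ^ 2 - u ^ 2) ^ 2 = l ^ 2 - a ^ 2 - u ^ 2 := Real.sq_sqrt hu.le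
  have hb : 0 < l ^ 2 - a ^ 2 := by nlinarith [sq_nonneg u]
  have hb0 : 0 < Real.sqrt (l ^ 2 - a ^ 2) := Real.sqrt_pos.2 hb
  have hbsq : Real.sqrt (l ^ 2 - a ^ 2) ^ 2 = l ^ 2 - a ^ 2 := Real.sq_sqrt hb.le
  have hr : 0 < l ^ 2 - u ^ 2 := by nlinarith [sq_nonneg a]
  have hr0 : 0 < Real.sqrt (l ^ 2 - u ^ 2) := Real.sqrt_pos.2 hr
  have hrsq : Real.sqrt (l ^ 2 - u ^ 2) ^ 2 = l ^ 2 - u ^ 2 := Real.sq_sqrt hr.le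
  have dw : HasDerivAt (fun u : ℝ => Real.sqrt (l ^ 2 - a ^ 2 - u ^ 2))
      (-u / Real.sqrt (l ^ 2 - a ^ 2 - u ^ 2)) u := by
    refine (((hp 2).const_sub (l ^ 2 - a ^ 2)).sqrt hu.ne').congr_deriv ?_
    field_simp
    norm_num
  have dr : HasDerivAt (fun u : ℝ => Real.sqrt (l ^ 2 - u ^ 2))
      (-u / Real.sqrt (l ^ 2 - u ^ 2)) u := by
    refine (((hp 2).const_sub (l ^ 2)).sqrt hr.ne').congr_deriv ?_
    field_simp
    norm_num
  have das : HasDerivAt (fun u : ℝ => Real.arcsin (u / Real.sqrt (l ^ 2 - a ^ 2)))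
      (1 / Real.sqrt (l ^ 2 - a ^ 2 - u ^ 2)) u := by
    have hlt : (u / Real.sqrt (l ^ 2 - a ^ 2)) ^ 2 < 1 := by
      rw [div_pow, hbsq, div_lt_one hb]; linarith
    have hlt' := abs_lt.1 ((sq_lt_one_iff_abs_lt_one _).1 hlt)
    have h := (Real.hasDerivAt_arcsin hlt'.1.ne' hlt'.2.ne).comp u
      (hid.div_const (Real.sqrt (l ^ 2 - a ^ 2)))
    refine h.congr_deriv ?_
    have : Real.sqrt (1 - (u / Real.sqrt (l ^ 2 - a ^ 2)) ^ 2) =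
        Real.sqrt (l ^ 2 - a ^ 2 - u ^ 2) / Real.sqrt (l ^ 2 - a ^ 2) := by
      rw [← Real.sqrt_div' _ hb.le, div_pow, hbsq]
      congr 1
      field_simp
    simp only [this]
    field_simp
  have dac : HasDerivAt (fun u : ℝ => Real.arccos (a / Real.sqrt (l ^ 2 - u ^ 2)))
      (-(a * u) / ((l ^ 2 - u ^ 2) * Real.sqrt (l ^ 2 - a ^ 2 - u ^ 2))) u := by
    have hlt : (a / Real.sqrt (l ^ 2 - u ^ 2)) ^ 2 < 1 := by
      rw [div_pow, hrsq, div_lt_one hr]; linarith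
    have hlt' := abs_lt.1 ((sq_lt_one_iff_abs_lt_one _).1 hlt)
    have h := (Real.hasDerivAt_arccos hlt'.1.ne' hlt'.2.ne).comp u
      ((hasDerivAt_const u a).div dr hr0.ne')
    refine h.congr_deriv ?_
    have : Real.sqrt (1 - (a / Real.sqrt (l ^ 2 - u ^ 2)) ^ 2) =
        Real.sqrt (l ^ 2 - a ^ 2 - u ^ 2) / Real.sqrt (l ^ 2 - u ^ 2) := by
      rw [← Real.sqrt_div' _ hr.le, div_pow, hrsq]
      congr 1
      field_simp
      ring
    rw [this]
    have e : l ^ 2 - u ^ 2 = Real.sqrt (l ^ 2 - u ^ 2) ^ 2 := hrsq.symm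
    generalize Real.sqrt (l ^ 2 - u ^ 2) = R at *
    rw [e]
    field_simp
    ring
  have dat : HasDerivAt (fun u : ℝ => Real.arctan (a * u / (l * Real.sqrt (l ^ 2 - a ^ 2 - u ^ 2))))
      (a * l / ((l ^ 2 - u ^ 2) * Real.sqrt (l ^ 2 - a ^ 2 - u ^ 2))) u := by
    have h := ((hid.const_mul a).div (dw.const_mul l) (by positivity)).arctan
    refine h.congr_deriv ?_
    simp only [id, Pi.div_apply]
    have e : l ^ 2 * Real.sqrt (l ^ 2 - a ^ 2 - u ^ 2) ^ 2 + a ^ 2 * u ^ 2 =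
      (l ^ 2 - a ^ 2) * (l ^ 2 - u ^ 2) := by rw [hwsq]; ring
    set w := Real.sqrt (l ^ 2 - a ^ 2 - u ^ 2)
    have e2 : 1 + (a * u / (l * w)) ^ 2 = (l ^ 2 - a ^ 2) * (l ^ 2 - u ^ 2) / (l ^ 2 * w ^ 2) := by
      rw [← e]; field_simp
    rw [e2]
    field_simp
    linear_combination hwsq
  have hau : HasDerivAt (fun u : ℝ => a * u + (l ^ 2 - u ^ 2) / 2) (a - u) u := by
    refine ((hid.const_mul a).add (((hp 2).const_sub (l ^ 2)).div_const 2)).congr_deriv ?_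
    norm_num
    ring
  have h1 : HasDerivAt (fun u : ℝ => a ^ 2 * (π / 2 - 1) * (a * u - u ^ 2 / 2))
      (a ^ 2 * (π / 2 - 1) * (a - u)) u := by
    refine (((hid.const_mul a).sub ((hp 2).div_const 2)).const_mul _).congr_deriv ?_
    norm_num
  have h2 : HasDerivAt (fun u : ℝ =>
      (a * l ^ 2 * u - l ^ 2 * u ^ 2 / 2 - a * u ^ 3 / 3 + u ^ 4 / 4) / 2)
      ((a - u) * (l ^ 2 - u ^ 2) / 2) u := by
    refine (((((hid.const_mul (a * l ^ 2)).sub (((hp 2).const_mul (l ^ 2)).div_const 2)).sub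
      (((hp 3).const_mul a).div_const 3)).add ((hp 4).div_const 4)).div_const 2).congr_deriv ?_
    norm_num
    ring
  have h := ((((((h1.sub h2).add ((hid.mul dw).const_mul (a ^ 2))).add
    (das.const_mul (a ^ 2 * (l ^ 2 + a ^ 2)))).add ((dw.pow 3).const_mul (2 * a / 3))).sub
    ((hau.mul dac).const_mul (2 * a ^ 2))).sub (dat.const_mul (2 * a ^ 3 * l))).add
    (dw.const_mul (a ^ 3))
  refine h.congr_deriv ?_
  simp only [id]
  norm_num
  set w := Real.sqrt (l ^ 2 - a ^ 2 - u ^ 2)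
  set A := Real.arccos (a / Real.sqrt (l ^ 2 - u ^ 2))
  have hrn := hr.ne'
  field_simp
  linear_combination (-2 * a ^ 2 * (l ^ 2 - u ^ 2)) * hwsq

set_option maxHeartbeats 1000000 in
theorem angular_integral_third_range (a : ℝ) (ha : 0 < a) (l : ℝ)
    (h1 : Real.sqrt 2 * a < l) (h2 : l < Real.sqrt 3 * a) :
    l ^ 2 *
      (∫ θ in Real.arccos (Real.sqrt 2 * a / l)..Real.arcsin (a / l),
        Real.cos θ * (a - l * Real.sin θ) *
          ∫ φ in Real.arccos (a / (l * Real.cos θ))..Real.arcsin (a / (l * Real.cos θ)),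
            (a - l * Real.cos θ * Real.cos φ) * (a - l * Real.cos θ * Real.sin φ)) =
      l / 8 *
        (8 * a * (l ^ 2 + a ^ 2) * Real.sqrt (l ^ 2 - 2 * a ^ 2)
          - (l ^ 2 + a ^ 2) * (l ^ 2 + 5 * a ^ 2)
          + 2 * π * a ^ 2 * (3 * l ^ 2 - 4 * a * l + 3 * a ^ 2)
          + 24 * a ^ 3 * l * Real.arccos (a ^ 2 / (l ^ 2 - a ^ 2))
          - 24 * a ^ 2 * (l ^ 2 + a ^ 2) * Real.arccos (a / Real.sqrt (l ^ 2 - a ^ 2))) := by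
  have s2 : Real.sqrt 2 ^ 2 = 2 := Real.sq_sqrt (by norm_num)
  have s3 : Real.sqrt 3 ^ 2 = 3 := Real.sq_sqrt (by norm_num)
  have s2p : 0 < Real.sqrt 2 := by positivity
  have hl : 0 < l := lt_trans (by positivity) h1
  have l2 : 2 * a ^ 2 < l ^ 2 := by
    have := pow_lt_pow_left₀ h1 (by positivity) (two_ne_zero)
    rwa [mul_pow, s2] at this
  have l3 : l ^ 2 < 3 * a ^ 2 := by
    have := pow_lt_pow_left₀ h2 hl.le (two_ne_zero)
    rwa [mul_pow, s3] at this
  have hal : a < l := by nlinarith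
  obtain ⟨d, hd⟩ : ∃ d, d = Real.sqrt (l ^ 2 - 2 * a ^ 2) := ⟨_, rfl⟩
  have hd0 : 0 < d := hd ▸ Real.sqrt_pos.2 (by linarith)
  have hdsq : d ^ 2 = l ^ 2 - 2 * a ^ 2 := hd ▸ Real.sq_sqrt (by linarith)
  have hda : d < a := by nlinarith
  obtain ⟨b, hb⟩ : ∃ b, b = Real.sqrt (l ^ 2 - a ^ 2) := ⟨_, rfl⟩
  have hb0 : 0 < b := hb ▸ Real.sqrt_pos.2 (by nlinarith)
  have hbsq : b ^ 2 = l ^ 2 - a ^ 2 := hb ▸ Real.sq_sqrt (by nlinarith)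
  have hab : a < b := by nlinarith
  -- endpoints
  have c1 : Real.sqrt 2 * a / l < 1 := (div_lt_one hl).2 h1
  have c0 : 0 < Real.sqrt 2 * a / l := by positivity
  have e1 : l * Real.sin (Real.arccos (Real.sqrt 2 * a / l)) = d := by
    rw [Real.sin_arccos, show 1 - (Real.sqrt 2 * a / l) ^ 2 = d ^ 2 / l ^ 2 by
      rw [div_pow, mul_pow, s2, hdsq]; field_simp, ← div_pow, Real.sqrt_sq (by positivity)]
    field_simp
  have a1 : a / l < 1 := (div_lt_one hl).2 hal
  have a0 : 0 < a / l := by positivity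
  have e2 : l * Real.sin (Real.arcsin (a / l)) = a := by
    rw [Real.sin_arcsin (by linarith) a1.le]; field_simp
  have hlow0 : 0 ≤ Real.arccos (Real.sqrt 2 * a / l) := Real.arccos_nonneg _
  have hhi : Real.arcsin (a / l) < π / 2 := by rwa [Real.arcsin_lt_pi_div_two]
  have hlowhi : Real.arccos (Real.sqrt 2 * a / l) ≤ Real.arcsin (a / l) := by
    rw [Real.le_arcsin_iff_sin_le' ⟨by linarith [Real.pi_pos], by
      rw [Real.arccos_le_pi_div_two]; exact c0.le⟩]
    rw [le_div_iff₀ hl]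
    linarith
  have hθ : ∀ θ ∈ Set.uIcc (Real.arccos (Real.sqrt 2 * a / l)) (Real.arcsin (a / l)),
      a < l * Real.cos θ := by
    intro θ hθ
    rw [Set.uIcc_of_le hlowhi] at hθ
    have hc : Real.cos (Real.arcsin (a / l)) ≤ Real.cos θ :=
      Real.cos_le_cos_of_nonneg_of_le_pi (hlow0.trans hθ.1) (by linarith [Real.pi_pos]) hθ.2
    have : l * Real.cos (Real.arcsin (a / l)) = b := by
      rw [Real.cos_arcsin, show 1 - (a / l) ^ 2 = b ^ 2 / l ^ 2 by
        rw [div_pow, hbsq]; field_simp, ← div_pow, Real.sqrt_sq (by positivity)]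
      field_simp
    nlinarith
  have hint : (∫ θ in Real.arccos (Real.sqrt 2 * a / l)..Real.arcsin (a / l),
        Real.cos θ * (a - l * Real.sin θ) *
          ∫ φ in Real.arccos (a / (l * Real.cos θ))..Real.arcsin (a / (l * Real.cos θ)),
            (a - l * Real.cos θ * Real.cos φ) * (a - l * Real.cos θ * Real.sin φ)) =
      (angF a l a - angF a l d) / l := by
    rw [integral_congr (g := fun θ => Real.cos θ * (a - l * Real.sin θ) *
      (a ^ 2 * (π / 2 - 2 * Real.arccos (a / (l * Real.cos θ))) - a ^ 2 - (l * Real.cos θ) ^ 2 / 2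
      + 2 * a * Real.sqrt ((l * Real.cos θ) ^ 2 - a ^ 2)))
      (fun θ hh => by simp only []; rw [ang_inner a _ ha (hθ θ hh)])]
    rw [integral_eq_sub_of_hasDerivAt (f := fun θ => angF a l (l * Real.sin θ) / l)]
    · simp only [e1, e2]
      ring
    · intro θ hh
      have hc := hθ θ hh
      have hcs := Real.sin_sq_add_cos_sq θ
      have q1 : l ^ 2 - (l * Real.sin θ) ^ 2 = (l * Real.cos θ) ^ 2 := by
        linear_combination (-l ^ 2) * hcs
      have q2 : l ^ 2 - a ^ 2 - (l * Real.sin θ) ^ 2 = (l * Real.cos θ) ^ 2 - a ^ 2 := by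
        linear_combination q1
      have h := angF_deriv a l (l * Real.sin θ) ha hl (by rw [q2]; nlinarith)
      have h' := (h.comp θ ((Real.hasDerivAt_sin θ).const_mul l)).div_const l
      refine h'.congr_deriv ?_
      rw [q1, q2, Real.sqrt_sq (by linarith)]
      field_simp
    · apply ContinuousOn.intervalIntegrable
      have : ContinuousOn (fun θ => a / (l * Real.cos θ))
        (Set.uIcc (Real.arccos (Real.sqrt 2 * a / l)) (Real.arcsin (a / l))) :=
        ContinuousOn.div (by fun_prop) (by fun_prop) (fun θ hh => by
          have := hθ θ hh
          linarith)
      have := Real.continuous_arccos.comp_continuousOn this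
      simp only [Function.comp_def] at this
      fun_prop
  rw [hint]
  obtain ⟨β, hβ⟩ : ∃ β, β = Real.arccos (a ^ 2 / (l ^ 2 - a ^ 2)) := ⟨_, rfl⟩
  have hq1 : a ^ 2 / b ^ 2 < 1 := (div_lt_one (by positivity)).2 (by nlinarith)
  have hq0 : 0 < a ^ 2 / b ^ 2 := by positivity
  rw [← hbsq] at hβ
  have hcβ : Real.cos β = a ^ 2 / b ^ 2 := by
    rw [hβ, Real.cos_arccos (by linarith) hq1.le]
  have hsβ : Real.sin β = l * d / b ^ 2 := by
    rw [hβ, Real.sin_arccos, show 1 - (a ^ 2 / b ^ 2) ^ 2 = (l * d / b ^ 2) ^ 2 by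
      have : b ^ 4 = (l * d) ^ 2 + a ^ 4 := by
        rw [mul_pow, hdsq, show b ^ 4 = (b ^ 2) ^ 2 by ring, hbsq]; ring
      field_simp
      linear_combination this, Real.sqrt_sq (by positivity)]
  have hβ0 : 0 < β := by rw [hβ, Real.arccos_pos]; exact hq1
  have hβ1 : β < π / 2 := by rw [hβ, Real.arccos_lt_pi_div_two]; exact hq0
  have t1 : Real.arctan (a * a / (l * d)) = π / 2 - β := by
    rw [Real.arctan_eq_of_tan_eq (x := π / 2 - β)]
    · rw [Real.tan_pi_div_two_sub, Real.tan_eq_sin_div_cos, hcβ, hsβ]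
      field_simp
    · exact ⟨by linarith, by linarith⟩
  have t2 : Real.arctan (a * d / (l * a)) = β / 2 := by
    rw [Real.arctan_eq_of_tan_eq (x := β / 2)]
    · have hs := Real.sin_two_mul (β / 2)
      have hc := Real.cos_two_mul (β / 2)
      rw [show 2 * (β / 2) = β by ring] at hs hc
      have hcp : 0 < Real.cos (β / 2) := Real.cos_pos_of_mem_Ioo ⟨by linarith, by linarith⟩
      rw [Real.tan_eq_sin_div_cos, div_eq_div_iff hcp.ne' (by positivity)]
      have hs2 : 2 * Real.sin (β / 2) * Real.cos (β / 2) * b ^ 2 = l * d := by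
        rw [← hs, hsβ]; field_simp
      have hc2 : 2 * Real.cos (β / 2) ^ 2 * b ^ 2 = l ^ 2 := by
        rw [show 2 * Real.cos (β / 2) ^ 2 = Real.cos β + 1 by linarith, hcβ]
        field_simp
        linarith
      have : (2 * Real.cos (β / 2) * b ^ 2) * (Real.sin (β / 2) * (l * a)) =
          (2 * Real.cos (β / 2) * b ^ 2) * (a * d * Real.cos (β / 2)) := by
        linear_combination (l * a) * hs2 - a * d * hc2
      exact mul_left_cancel₀ (by positivity) this
    · exact ⟨by linarith, by linarith⟩
  have t3 : Real.arcsin (d / b) = Real.arccos (a / b) := by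
    rw [Real.arccos_eq_arcsin (by positivity)]
    congr 1
    rw [show 1 - (a / b) ^ 2 = (d / b) ^ 2 by
      field_simp
      linarith, Real.sqrt_sq (by positivity)]
  have t4 : Real.arccos (a / (Real.sqrt 2 * a)) = π / 4 := by
    rw [← Real.arccos_cos (x := π / 4) (by positivity) (by linarith [Real.pi_pos]),
      Real.cos_pi_div_four]
    congr 1
    rw [div_eq_div_iff (by positivity) (by norm_num)]
    linear_combination (-a) * s2
  have r1 : Real.sqrt (l ^ 2 - a ^ 2 - a ^ 2) = d := by
    rw [hd]; congr 1; ring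
  have r2 : Real.sqrt (l ^ 2 - a ^ 2 - d ^ 2) = a := by
    rw [hdsq, show l ^ 2 - a ^ 2 - (l ^ 2 - 2 * a ^ 2) = a ^ 2 by ring, Real.sqrt_sq ha.le]
  have r3 : Real.sqrt (l ^ 2 - d ^ 2) = Real.sqrt 2 * a := by
    rw [hdsq, show l ^ 2 - (l ^ 2 - 2 * a ^ 2) = (Real.sqrt 2 * a) ^ 2 by rw [mul_pow, s2]; ring,
      Real.sqrt_sq (by positivity)]
  have F1 : angF a l a - angF a l d = 1 / 8 *
        (8 * a * (l ^ 2 + a ^ 2) * d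
          - (l ^ 2 + a ^ 2) * (l ^ 2 + 5 * a ^ 2)
          + 2 * π * a ^ 2 * (3 * l ^ 2 - 4 * a * l + 3 * a ^ 2)
          + 24 * a ^ 3 * l * β
          - 24 * a ^ 2 * (l ^ 2 + a ^ 2) * Real.arccos (a / b)) := by
    unfold angF
    rw [r1, r2, r3, ← hb, t1, t2, t3, t4, Real.arcsin_eq_pi_div_two_sub_arccos]
    have d3 : d ^ 3 = d * (l ^ 2 - 2 * a ^ 2) := by rw [← hdsq]; ring
    have d4 : d ^ 4 = (l ^ 2 - 2 * a ^ 2) ^ 2 := by rw [← hdsq]; ring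
    rw [d3, d4, hdsq]
    ring
  rw [F1, ← hbsq, ← hβ, hbsq, ← hb, ← hd]
  field_simp
end
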